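/- arXiv:math/9204236 — 3 statements merged into one kernel-verified Lean document; each statement's English description precedes it below -/
import Mathlib

section
/- (A_ℓ Bailey Pair Inversion.) Let ℓ ≥ 1, let q, a, x_1, …, x_ℓ be nonzero complex numbers such that every q-shifted factorial occurring in a denominator below is nonzero. Let M and M* be the A_ℓ Bailey transform matrices: M(i;j) := ∏_{r,s=1}^{ℓ} ((q x_r/x_s) q^{j_r−j_s}; q)_{i_r−j_r}^{−1} · ∏_{k=1}^{ℓ} (a q x_k/x_ℓ; q)_{i_k+(j_1+⋯+j_ℓ)}^{−1}, and M*(i;j) := ∏_{k=1}^{ℓ} [1 − a (x_k/x_ℓ) q^{i_k+(i_1+⋯+i_ℓ)}] · ∏_{k=1}^{ℓ} (a q x_k/x_ℓ; q)_{j_k+(i_1+⋯+i_ℓ)−1} · ∏_{r,s=1}^{ℓ} ((q x_r/x_s) q^{j_r−j_s}; q)_{i_r−j_r}^{−1} · (−1)^{|i|−|j|} q^{binom(|i|−|j|,2)}. Let A = {A_y} and B = {B_y} be sequences of complex numbers indexed by vectors y of nonnegative integers of length ℓ. Then B_N = ∑_{0 ≤ y_k ≤ N_k, k=1,…,ℓ}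 M(N;y) A_y holds for every vector N of nonnegative integers if and only if A_N = ∑_{0 ≤ y_k ≤ N_k, k=1,…,ℓ} M*(N;y) B_y holds for every vector N of nonnegative integers. -/
set_option autoImplicit false
set_option maxHeartbeats 1000000

open Finset

/-- The `q`-shifted factorial `(a; q)_n`, extended to all integers `n` by the
standard convention `(a;q)_{-m} = 1 / ∏_{k=1}^{m} (1 - a q^{-k})`. -/
noncomputable def qp (a q : ℂ) (n : ℤ) : ℂ :=
  if 0 ≤ n then ∏ k ∈ Finset.range n.toNat, (1 - a * q ^ (k : ℤ))
  else (∏ k ∈ Finset.range (-n).toNat, (1 - a * q ^ (-(k : ℤ) - 1)))⁻¹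

/-- The `A_ℓ` Bailey transform matrix `M(i;j)`; `xl` denotes `x_ℓ`. -/
noncomputable def MA (ℓ : ℕ) (q a : ℂ) (x : Fin ℓ → ℂ) (xl : ℂ)
    (i j : Fin ℓ → ℕ) : ℂ :=
  (∏ r, ∏ s,
    (qp (q * (x r / x s) * q ^ ((j r : ℤ) - (j s : ℤ))) q ((i r : ℤ) - (j r : ℤ)))⁻¹) *
  ∏ k, (qp (a * q * (x k / xl)) q ((i k : ℤ) + ∑ s, (j s : ℤ)))⁻¹

/-- The `A_ℓ` Bailey transform matrix `M*(i;j)`; `xl` denotes `x_ℓ`. -/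
noncomputable def MAstar (ℓ : ℕ) (q a : ℂ) (x : Fin ℓ → ℂ) (xl : ℂ)
    (i j : Fin ℓ → ℕ) : ℂ :=
  (∏ k, (1 - a * (x k / xl) * q ^ ((i k : ℤ) + ∑ s, (i s : ℤ)))) *
  (∏ k, qp (a * q * (x k / xl)) q ((j k : ℤ) + (∑ s, (i s : ℤ)) - 1)) *
  (∏ r, ∏ s,
    (qp (q * (x r / x s) * q ^ ((j r : ℤ) - (j s : ℤ))) q ((i r : ℤ) - (j r : ℤ)))⁻¹) *
  (-1 : ℂ) ^ ((∑ s, (i s : ℤ)) - ∑ s, (j s : ℤ)) *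
  q ^ (((∑ s, (i s : ℤ)) - ∑ s, (j s : ℤ)) *
        ((∑ s, (i s : ℤ)) - (∑ s, (j s : ℤ)) - 1) / 2)

namespace Bailey

variable {ℓ : ℕ}

lemma interp (w : Fin ℓ → ℂ) (hw : Function.Injective w) (u : ℂ) :
    ∃ g : Fin ℓ → ℂ, ∀ z : Fin ℓ → ℂ,
      ∏ s, (u - z s) = ∏ s, (u - w s) + ∑ k, g k * ∏ s, (w k - z s) := by
  refine ⟨fun k => (Lagrange.basis Finset.univ w k).eval u, fun z => ?_⟩
  have hm : ∀ z : Fin ℓ → ℂ, (∏ s, (Polynomial.X - Polynomial.C (z s))).degree = (ℓ : WithBot ℕ) := by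
    intro z
    rw [Polynomial.degree_prod]; simp
  have hmon : ∀ z : Fin ℓ → ℂ, (∏ s, (Polynomial.X - Polynomial.C (z s))).Monic := fun z =>
    Polynomial.monic_prod_of_monic _ _ (fun i _ => Polynomial.monic_X_sub_C _)
  have hdeg : (∏ s, (Polynomial.X - Polynomial.C (z s)) -
      ∏ s, (Polynomial.X - Polynomial.C (w s))).degree < (((Finset.univ : Finset (Fin ℓ)).card : ℕ) : WithBot ℕ) := by
    have := Polynomial.degree_sub_lt_left (p := ∏ s, (Polynomial.X - Polynomial.C (z s)))
      (q := ∏ s, (Polynomial.X - Polynomial.C (w s))) (by rw [hm, hm]) (hmon z).ne_zero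
      (by rw [(hmon z).leadingCoeff, (hmon w).leadingCoeff])
    rw [hm] at this
    simpa using this
  have h := Lagrange.eq_interpolate (s := Finset.univ) (v := w) hw.injOn hdeg
  have h2 := congrArg (Polynomial.eval u) h
  rw [Lagrange.interpolate_apply] at h2
  simp only [Polynomial.eval_sub, Polynomial.eval_prod, Polynomial.eval_X, Polynomial.eval_C,
    Polynomial.eval_finsetSum, Polynomial.eval_mul] at h2
  have h0 : ∀ k, ∏ s, (w k - w s) = 0 := fun k =>
    Finset.prod_eq_zero (Finset.mem_univ k) (sub_self _)
  simp only [h0, sub_zero] at h2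
  rw [sub_eq_iff_eq_add] at h2
  rw [h2, add_comm]
  congr 1
  exact Finset.sum_congr rfl fun k _ => mul_comm _ _

/-- `x_r q^t`. -/
noncomputable def X (q : ℂ) (x : Fin ℓ → ℂ) (r : Fin ℓ) (t : ℕ) : ℂ := x r * q ^ t

noncomputable def P (q : ℂ) (x : Fin ℓ → ℂ) (i j : Fin ℓ → ℕ) : ℂ :=
  ∏ r, ∏ s, ∏ t ∈ Finset.Ico (j r) (i r), (1 - X q x r (t+1) / X q x s (j s))

noncomputable def c (q : ℂ) (x : Fin ℓ → ℂ) (i j y : Fin ℓ → ℕ) : ℂ :=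
  (P q x i y)⁻¹ * (P q x y j)⁻¹ * (-1) ^ (∑ s, i s - ∑ s, y s)
    * q ^ ((∑ s, i s - ∑ s, y s).choose 2)

noncomputable def D (q : ℂ) (x : Fin ℓ → ℂ) (i j : Fin ℓ → ℕ) (F : (Fin ℓ → ℕ) → ℂ) : ℂ :=
  ∑ y ∈ Finset.Icc j i, c q x i j y * F y

lemma D_add (q : ℂ) (x : Fin ℓ → ℂ) (i j : Fin ℓ → ℕ) (F G : (Fin ℓ → ℕ) → ℂ) :
    D q x i j (fun y => F y + G y) = D q x i j F + D q x i j G := by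
  simp [D, mul_add, Finset.sum_add_distrib]

lemma D_smul (q : ℂ) (x : Fin ℓ → ℂ) (i j : Fin ℓ → ℕ) (a : ℂ) (F : (Fin ℓ → ℕ) → ℂ) :
    D q x i j (fun y => a * F y) = a * D q x i j F := by
  simp only [D, Finset.mul_sum]
  exact Finset.sum_congr rfl fun y _ => by ring

lemma D_sum (q : ℂ) (x : Fin ℓ → ℂ) (i j : Fin ℓ → ℕ) (F : Fin ℓ → (Fin ℓ → ℕ) → ℂ) :
    D q x i j (fun y => ∑ k, F k y) = ∑ k, D q x i j (F k) := by
  simp only [D, Finset.mul_sum]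
  exact Finset.sum_comm

lemma D_not_le (q : ℂ) (x : Fin ℓ → ℂ) (i j : Fin ℓ → ℕ) (F : (Fin ℓ → ℕ) → ℂ) (h : ¬ j ≤ i) :
    D q x i j F = 0 := by
  simp [D, Finset.Icc_eq_empty h]

/-- nondegeneracy -/
def ND (q : ℂ) (x : Fin ℓ → ℂ) : Prop :=
  q ≠ 0 ∧ (∀ k, x k ≠ 0) ∧ ∀ r s m n, (r ≠ s ∨ m ≠ n) → X q x r m ≠ X q x s n

variable {q : ℂ} {x : Fin ℓ → ℂ}

lemma X_ne (h : ND q x) (r : Fin ℓ) (m : ℕ) : X q x r m ≠ 0 :=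
  mul_ne_zero (h.2.1 r) (pow_ne_zero _ h.1)

lemma one_sub_ne (h : ND q x) (r s : Fin ℓ) (m n : ℕ) (hh : r ≠ s ∨ m ≠ n) :
    1 - X q x r m / X q x s n ≠ 0 := by
  intro h0
  apply h.2.2 r s m n hh
  have := X_ne h s n
  field_simp at h0
  linear_combination -h0

lemma P_ne (h : ND q x) (i j : Fin ℓ → ℕ) : P q x i j ≠ 0 := by
  unfold P
  refine Finset.prod_ne_zero_iff.2 fun r _ => Finset.prod_ne_zero_iff.2 fun s _ =>
    Finset.prod_ne_zero_iff.2 fun t ht => one_sub_ne h _ _ _ _ ?_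
  by_cases hrs : r = s
  · subst hrs
    right
    have := (Finset.mem_Ico.1 ht).1
    omega
  · exact Or.inl hrs

lemma P_self (i : Fin ℓ → ℕ) : P q x i i = 1 := by simp [P]

lemma sum_add_single (i : Fin ℓ → ℕ) (k : Fin ℓ) :
    ∑ s, (i + Pi.single k 1 : Fin ℓ → ℕ) s = ∑ s, i s + 1 := by
  simp [Finset.sum_add_distrib]

lemma P_R1 (i y : Fin ℓ → ℕ) (k : Fin ℓ) (hy : y ≤ i) :
    P q x (i + Pi.single k 1) y
      = P q x i y * ∏ s, (1 - X q x k (i k + 1) / X q x s (y s)) := by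
  unfold P
  have : ∏ s, (1 - X q x k (i k + 1) / X q x s (y s)) =
      ∏ r, (if r = k then ∏ s, (1 - X q x k (i k + 1) / X q x s (y s)) else 1) := by simp
  rw [this, ← Finset.prod_mul_distrib]
  refine Finset.prod_congr rfl fun r _ => ?_
  by_cases hr : r = k
  · subst hr
    simp only [if_true, ← Finset.prod_mul_distrib]
    refine Finset.prod_congr rfl fun s _ => ?_
    simp only [Pi.add_apply, Pi.single_eq_same]
    rw [Finset.prod_Ico_succ_top (hy r)]
  · simp [hr]

lemma X_succ_div (h : ND q x) (r s : Fin ℓ) (m n : ℕ) :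
    X q x r (m + 1) / X q x s (n + 1) = X q x r m / X q x s n := by
  have := h.1
  have := h.2.1 s
  unfold X
  field_simp
  ring

lemma tele (f : ℕ → ℂ) (m n : ℕ) (h : m ≤ n) :
    f m * ∏ t ∈ Finset.Ico m n, f (t + 1) = (∏ t ∈ Finset.Ico m n, f t) * f n := by
  rw [Finset.prod_Ico_add' f m n 1, ← Finset.prod_Ico_succ_top h,
    ← Finset.prod_eq_prod_Ico_succ_bot (by omega)]

lemma P_R2 (h : ND q x) (j : Fin ℓ → ℕ) (k : Fin ℓ) : ∃ C : ℂ, ∀ y, j + Pi.single k 1 ≤ y →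
    (P q x y j)⁻¹ * ∏ s, (X q x k (j k) - X q x s (y s)) = C * (P q x y (j + Pi.single k 1))⁻¹ := by
  set A : Fin ℓ → Fin ℓ → ℂ := fun r s =>
    if s = k ∧ r ≠ k then 1 - X q x r (j r) / X q x k (j k) else 1 with hA
  set B : Fin ℓ → Fin ℓ → ℂ := fun r s =>
    if r = k ∧ s ≠ k then 1 - X q x k (j k + 1) / X q x s (j s) else 1 with hB
  have hB0 : ∏ r, ∏ s, B r s ≠ 0 := by
    refine Finset.prod_ne_zero_iff.2 fun r _ => Finset.prod_ne_zero_iff.2 fun s _ => ?_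
    simp only [hB]
    split_ifs with hh
    · exact one_sub_ne h _ _ _ _ (Or.inl (Ne.symm hh.2))
    · exact one_ne_zero
  refine ⟨(∏ r, ∏ s, A r s) * (∏ r, ∏ s, B r s)⁻¹ * X q x k (j k) ^ ℓ, fun y hy => ?_⟩
  have key : P q x y j * ∏ r, ∏ s, A r s =
      P q x y (j + Pi.single k 1) * (∏ r, ∏ s, B r s) * ∏ r, (1 - X q x r (y r) / X q x k (j k)) := by
    have : ∏ r, (1 - X q x r (y r) / X q x k (j k)) =
      ∏ r, ∏ s, (if s = k then (1 - X q x r (y r) / X q x k (j k)) else 1) := by simp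
    rw [this]
    unfold P
    simp only [← Finset.prod_mul_distrib]
    refine Finset.prod_congr rfl fun r _ => Finset.prod_congr rfl fun s _ => ?_
    have hyk : j k + 1 ≤ y k := by simpa using hy k
    have hyr : j r ≤ y r := le_trans (by simp) (hy r)
    by_cases hr : r = k
    · subst hr
      by_cases hs : s = r
      · subst hs
        simp only [hA, hB, Pi.add_apply, Pi.single_eq_same]
        simp only [ne_eq, not_true_eq_false, and_false, if_false, if_true, mul_one]
        simp only [X_succ_div h]
        rw [Finset.prod_Ico_add' (fun t => 1 - X q x s t / X q x s (j s)) (j s) (y s) 1,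
          Finset.prod_Ico_succ_top hyk]
      · simp only [hA, hB, Pi.add_apply, Pi.single_eq_same, Pi.single_eq_of_ne hs]
        simp only [hs, ne_eq, not_true_eq_false, and_false, if_false, mul_one, not_false_eq_true, and_self, if_true, add_zero]
        rw [Finset.prod_eq_prod_Ico_succ_bot (by omega), mul_comm]
    · by_cases hs : s = k
      · subst hs
        simp only [hA, hB, Pi.add_apply, Pi.single_eq_same, Pi.single_eq_of_ne hr]
        simp only [hr, ne_eq, false_and, if_false, mul_one, not_false_eq_true, and_self, if_true, add_zero]
        simp only [X_succ_div h]
        rw [mul_comm]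
        simpa using tele (fun t => 1 - X q x r t / X q x s (j s)) _ _ hyr
      · simp [hA, hB, hr, hs]
  have hv := X_ne h k (j k)
  have e : ∏ s, (X q x k (j k) - X q x s (y s)) =
      X q x k (j k) ^ ℓ * ∏ r, (1 - X q x r (y r) / X q x k (j k)) := by
    have : X q x k (j k) ^ ℓ = ∏ r : Fin ℓ, X q x k (j k) := by simp
    rw [this, ← Finset.prod_mul_distrib]
    refine Finset.prod_congr rfl fun s _ => ?_
    field_simp
  rw [e]
  have h1 := P_ne h y j
  have h2 := P_ne h y (j + Pi.single k 1)
  generalize ∏ r, (1 - X q x r (y r) / X q x k (j k)) = Z at *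
  field_simp
  linear_combination -key

lemma c_R1 (h : ND q x) (i j : Fin ℓ → ℕ) (k : Fin ℓ) : ∃ C : ℂ, ∀ y, y ≤ i →
    c q x (i + Pi.single k 1) j y * ∏ s, (X q x k (i k + 1) - X q x s (y s)) = C * c q x i j y := by
  refine ⟨-(-1) ^ ℓ * (∏ s, x s) * q ^ (∑ s, i s), fun y hy => ?_⟩
  have hsum : ∑ s, y s ≤ ∑ s, i s := Finset.sum_le_sum fun s _ => hy s
  have e1 : ∏ s, (X q x k (i k + 1) - X q x s (y s)) =
      (-1) ^ ℓ * ((∏ s, x s) * q ^ (∑ s, y s)) *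
        ∏ s, (1 - X q x k (i k + 1) / X q x s (y s)) := by
    have a1 : ((-1 : ℂ)) ^ ℓ = ∏ _s : Fin ℓ, (-1 : ℂ) := by simp
    rw [a1, ← Finset.prod_pow_eq_pow_sum, ← Finset.prod_mul_distrib, ← Finset.prod_mul_distrib,
      ← Finset.prod_mul_distrib]
    refine Finset.prod_congr rfl fun s _ => ?_
    have := X_ne h s (y s)
    change _ = -1 * X q x s (y s) * _
    field_simp
    ring
  have hP := P_R1 (q := q) (x := x) i y k hy
  have hne := P_ne h (i + Pi.single k 1) y
  rw [hP] at hne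
  unfold c
  rw [e1, hP, sum_add_single]
  obtain ⟨n, hn⟩ := Nat.exists_eq_add_of_le hsum
  rw [hn, show ∑ s, y s + n + 1 - ∑ s, y s = n + 1 by omega, Nat.add_sub_cancel_left,
    Nat.choose_succ_succ' n 1, Nat.choose_one_right]
  have h1 := left_ne_zero_of_mul hne
  have h2 := right_ne_zero_of_mul hne
  have h3 := P_ne h y j
  generalize ∏ s, (1 - X q x k (i k + 1) / X q x s (y s)) = Z at *
  field_simp
  ring

lemma c_R2 (h : ND q x) (i j : Fin ℓ → ℕ) (k : Fin ℓ) : ∃ C : ℂ, ∀ y, j + Pi.single k 1 ≤ y →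
    c q x i j y * ∏ s, (X q x k (j k) - X q x s (y s)) = C * c q x i (j + Pi.single k 1) y := by
  obtain ⟨C, hC⟩ := P_R2 h j k
  refine ⟨C, fun y hy => ?_⟩
  unfold c
  linear_combination ((P q x i y)⁻¹ * (-1) ^ (∑ s, i s - ∑ s, y s)
    * q ^ ((∑ s, i s - ∑ s, y s).choose 2)) * hC y hy

lemma D_R1 (h : ND q x) (i j : Fin ℓ → ℕ) (k : Fin ℓ) : ∃ C : ℂ, ∀ F,
    D q x (i + Pi.single k 1) j (fun y => (∏ s, (X q x k (i k + 1) - X q x s (y s))) * F y)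
      = C * D q x i j F := by
  obtain ⟨C, hC⟩ := c_R1 h i j k
  refine ⟨C, fun F => ?_⟩
  unfold D
  rw [Finset.mul_sum, ← Finset.sum_subset (s₁ := Finset.Icc j i)]
  · refine Finset.sum_congr rfl fun y hy => ?_
    rw [← mul_assoc, hC y (Finset.mem_Icc.1 hy).2, mul_assoc]
  · exact Finset.Icc_subset_Icc le_rfl (by simp)
  · intro y hy hy'
    rw [Finset.mem_Icc] at hy hy'
    have : y k = i k + 1 := by
      by_contra hne
      refine hy' ⟨hy.1, fun s => ?_⟩
      have : y s ≤ i s + (Pi.single k 1 : Fin ℓ → ℕ) s := hy.2 s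
      change y s ≤ i s
      by_cases hs : s = k
      · subst hs
        simp at this
        omega
      · simpa [hs] using this
    beta_reduce
    rw [Finset.prod_eq_zero (Finset.mem_univ k) (by rw [this, sub_self])]
    ring

lemma D_R2 (h : ND q x) (i j : Fin ℓ → ℕ) (k : Fin ℓ) : ∃ C : ℂ, ∀ F,
    D q x i j (fun y => (∏ s, (X q x k (j k) - X q x s (y s))) * F y)
      = C * D q x i (j + Pi.single k 1) F := by
  obtain ⟨C, hC⟩ := c_R2 h i j k
  refine ⟨C, fun F => ?_⟩
  unfold D
  rw [Finset.mul_sum, ← Finset.sum_subset (s₁ := Finset.Icc (j + Pi.single k 1) i)]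
  · refine Finset.sum_congr rfl fun y hy => ?_
    rw [← mul_assoc, hC y (Finset.mem_Icc.1 hy).1, mul_assoc]
  · exact Finset.Icc_subset_Icc (by simp) le_rfl
  · intro y hy hy'
    rw [Finset.mem_Icc] at hy hy'
    have : y k = j k := by
      by_contra hne
      refine hy' ⟨fun s => ?_, hy.2⟩
      have : j s ≤ y s := hy.1 s
      change j s + (Pi.single k 1 : Fin ℓ → ℕ) s ≤ y s
      by_cases hs : s = k
      · subst hs
        simp
        omega
      · simpa [hs] using this
    beta_reduce
    rw [Finset.prod_eq_zero (Finset.mem_univ k) (by rw [this, sub_self])]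
    ring

lemma inj (h : ND q x) (i : Fin ℓ → ℕ) : Function.Injective (fun k => X q x k (i k)) := by
  intro r s hrs
  by_contra hne
  exact h.2.2 r s _ _ (Or.inl hne) hrs

lemma pred (i : Fin ℓ → ℕ) (k : Fin ℓ) (hk : 0 < i k) : ∃ i0 : Fin ℓ → ℕ, i = i0 + Pi.single k 1 := by
  refine ⟨Function.update i k (i k - 1), funext fun s => ?_⟩
  by_cases hs : s = k
  · subst hs
    simp
    omega
  · simp [hs]

lemma exists_lt (i j : Fin ℓ → ℕ) (hji : j ≤ i) (hs : ∑ s, j s < ∑ s, i s) :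
    ∃ k, ∃ i0 : Fin ℓ → ℕ, i = i0 + Pi.single k 1 ∧ j ≤ i0 := by
  obtain ⟨k, -, hk⟩ := Finset.exists_lt_of_sum_lt hs
  obtain ⟨i0, rfl⟩ := pred i k (by omega)
  refine ⟨k, i0, rfl, fun s => ?_⟩
  by_cases hs : s = k
  · subst hs
    simp at hk
    omega
  · simpa [hs] using hji s

lemma D_one (h : ND q x) (n : ℕ) : ∀ i j : Fin ℓ → ℕ, ∑ s, i s = ∑ s, j s + n + 1 →
    D q x i j (fun _ => 1) = 0 := by
  induction n with
  | zero =>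
    intro i j hs
    by_cases hji : j ≤ i
    swap
    · exact D_not_le _ _ _ _ _ hji
    obtain ⟨k, i0, rfl, h0⟩ := exists_lt i j hji (by omega)
    rw [sum_add_single] at hs
    have : i0 = j := by
      have h1 := (Finset.sum_eq_sum_iff_of_le (s := Finset.univ) (fun s _ => h0 s)).1 (by omega)
      exact funext fun s => (h1 s (Finset.mem_univ s)).symm
    subst this
    have hI : Finset.Icc i0 (i0 + Pi.single k 1) = {i0, i0 + Pi.single k 1} := by
      ext y
      simp only [Finset.mem_Icc, Finset.mem_insert, Finset.mem_singleton]
      constructor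
      · rintro ⟨h1, h2⟩
        by_cases hk : y k = i0 k
        · left
          funext s
          by_cases hs : s = k
          · subst hs; exact hk
          · have a : i0 s ≤ y s := h1 s
            have b : y s ≤ i0 s + (Pi.single k 1 : Fin ℓ → ℕ) s := h2 s
            simp [hs] at b
            omega
        · right
          funext s
          have a : i0 s ≤ y s := h1 s
          have b : y s ≤ i0 s + (Pi.single k 1 : Fin ℓ → ℕ) s := h2 s
          by_cases hs : s = k
          · subst hs
            simp at b ⊢
            omega
          · simp [hs] at b ⊢
            omega
      · rintro (rfl | rfl)
        · simp
        · simp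
    unfold D
    rw [hI, Finset.sum_pair]
    · simp only [c, P_self, sum_add_single]
      simp
    · intro he
      have := congrFun he k
      simp at this
  | succ n ih =>
    intro i j hs
    by_cases hji : j ≤ i
    swap
    · exact D_not_le _ _ _ _ _ hji
    obtain ⟨k, i0, rfl, h0⟩ := exists_lt i j hji (by omega)
    obtain ⟨C, hC⟩ := D_R1 h i0 j k
    have h1 := hC (fun _ => 1)
    rw [sum_add_single] at hs
    rw [ih i0 j (by omega)] at h1
    obtain ⟨g, hg⟩ := interp _ (inj h j) (X q x k (i0 k + 1))
    have h2 : ∀ r, D q x (i0 + Pi.single k 1) j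
        (fun y => g r * ∏ s, (X q x r (j r) - X q x s (y s))) = 0 := by
      intro r
      obtain ⟨C', hC'⟩ := D_R2 h (i0 + Pi.single k 1) j r
      have := hC' (fun _ => 1)
      rw [ih _ _ (by rw [sum_add_single, sum_add_single]; omega)] at this
      simp only [mul_one, mul_zero] at this
      rw [D_smul, this, mul_zero]
    simp only [mul_one] at h1
    rw [show (fun y : Fin ℓ → ℕ => ∏ s, (X q x k (i0 k + 1) - X q x s (y s))) = _ from
      funext fun y => hg (fun s => X q x s (y s)), D_add, D_sum] at h1
    simp only [h2, Finset.sum_const_zero, add_zero, mul_zero] at h1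
    have h3 := D_smul q x (i0 + Pi.single k 1) j
      (∏ s, (X q x k (i0 k + 1) - X q x s (j s))) (fun _ => 1)
    simp only [mul_one] at h3
    rw [h3] at h1
    refine (mul_eq_zero.1 h1).resolve_left (Finset.prod_ne_zero_iff.2 fun s _ => ?_)
    refine sub_ne_zero.2 (h.2.2 _ _ _ _ ?_)
    by_cases hsk : k = s
    · subst hsk
      right
      have : j k ≤ i0 k := h0 k
      omega
    · exact Or.inl hsk

lemma D_list (h : ND q x) (us : List ℂ) : ∀ i j : Fin ℓ → ℕ, ∑ s, j s + us.length < ∑ s, i s →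
    D q x i j (fun y => (us.map fun u => ∏ s, (u - X q x s (y s))).prod) = 0 := by
  induction us with
  | nil =>
    intro i j hs
    simp only [List.length_nil, add_zero] at hs
    obtain ⟨n, hn⟩ := Nat.exists_eq_add_of_lt hs
    simpa using D_one h n i j hn
  | cons u us ih =>
    intro i j hs
    simp only [List.length_cons] at hs
    obtain ⟨g, hg⟩ := interp _ (inj h i) u
    rw [show (fun y : Fin ℓ → ℕ => ((u :: us).map fun u => ∏ s, (u - X q x s (y s))).prod) = _ from
      funext fun y => by
        rw [List.map_cons, List.prod_cons, hg (fun s => X q x s (y s)), add_mul, Finset.sum_mul]]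
    rw [D_add, D_sum, D_smul, ih i j (by omega), mul_zero, zero_add]
    refine Finset.sum_eq_zero fun k _ => ?_
    simp only [mul_assoc]
    rw [D_smul]
    rcases Nat.eq_zero_or_pos (i k) with hk | hk
    · unfold D
      rw [Finset.sum_eq_zero, mul_zero]
      intro y hy
      have : y k = i k := by
        have : y k ≤ i k := (Finset.mem_Icc.1 hy).2 k
        omega
      beta_reduce
      rw [Finset.prod_eq_zero (Finset.mem_univ k) (by rw [this, sub_self])]
      ring
    · obtain ⟨i0, rfl⟩ := pred i k hk
      obtain ⟨C, hC⟩ := D_R1 h i0 j k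
      have := hC (fun y => (us.map fun u => ∏ s, (u - X q x s (y s))).prod)
      rw [sum_add_single] at hs
      rw [ih i0 j (by omega), mul_zero] at this
      simp only [Pi.add_apply, Pi.single_eq_same]
      rw [this, mul_zero]

lemma qp_nat (α q : ℂ) (n : ℕ) : qp α q (n : ℤ) = ∏ k ∈ Finset.range n, (1 - α * q ^ k) := by
  simp [qp]

lemma qp_succ (α q : ℂ) (n : ℕ) : qp α q ((n + 1 : ℕ) : ℤ) = qp α q n * (1 - α * q ^ n) := by
  rw [qp_nat, qp_nat, Finset.prod_range_succ]

lemma qp_P (hq : q ≠ 0) (hx : ∀ k, x k ≠ 0) (i j : Fin ℓ → ℕ) (hji : j ≤ i) :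
    ∏ r, ∏ s, (qp (q * (x r / x s) * q ^ ((j r : ℤ) - (j s : ℤ))) q ((i r : ℤ) - (j r : ℤ)))⁻¹
      = (P q x i j)⁻¹ := by
  simp only [Finset.prod_inv_distrib]
  congr 1
  unfold P
  refine Finset.prod_congr rfl fun r _ => Finset.prod_congr rfl fun s _ => ?_
  rw [← Nat.cast_sub (hji r), qp_nat, Finset.prod_Ico_eq_prod_range]
  refine Finset.prod_congr rfl fun t _ => ?_
  congr 1
  have := hx s
  rw [zpow_sub₀ hq, zpow_natCast, zpow_natCast]
  unfold X
  field_simp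
  ring

lemma ND_of (hq : q ≠ 0) (hx : ∀ k, x k ≠ 0)
    (hd1 : ∀ i j : Fin ℓ → ℕ, (∀ k, j k ≤ i k) → ∀ r s : Fin ℓ,
      qp (q * (x r / x s) * q ^ ((j r : ℤ) - (j s : ℤ))) q ((i r : ℤ) - (j r : ℤ)) ≠ 0) :
    ND q x := by
  refine ⟨hq, hx, ?_⟩
  have hpow : ∀ (_ : Fin ℓ) d, q ^ (d + 1) ≠ 1 := by
    intro r d hd
    have := hd1 (fun _ => d + 1) (fun _ => 0) (fun _ => Nat.zero_le _) r r
    rw [show (((d + 1 : ℕ) : ℤ) - ((0 : ℕ) : ℤ)) = ((d + 1 : ℕ) : ℤ) by simp, qp_succ] at this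
    apply right_ne_zero_of_mul this
    have h0 := hx r
    simp only [sub_self, zpow_zero, mul_one, div_self h0]
    rw [← pow_succ', hd, sub_self]
  have hsucc : ∀ r s m n, r ≠ s → X q x r (m + 1) ≠ X q x s n := by
    intro r s m n hrs he
    have := hd1 (Function.update (fun _ => n) r (m + 1)) (Function.update (fun _ => n) r m)
      (fun k => by by_cases hk : k = r
                   · subst hk; simp
                   · simp [hk]) r s
    simp only [Function.update_self, Function.update_of_ne hrs.symm] at this
    rw [show (((m + 1 : ℕ) : ℤ) - (m : ℤ)) = ((0 + 1 : ℕ) : ℤ) by simp, qp_succ] at this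
    apply right_ne_zero_of_mul this
    rw [zpow_sub₀ hq, zpow_natCast, zpow_natCast]
    have h0 := hx s
    unfold X at he
    field_simp
    linear_combination -he
  intro r s m n hh he
  by_cases hrs : r = s
  · subst hrs
    have hmn : m ≠ n := by tauto
    have h0 := hx r
    have key : ∀ m n : ℕ, m < n → X q x r m ≠ X q x r n := by
      intro m n hlt he
      obtain ⟨d, rfl⟩ := Nat.exists_eq_add_of_lt hlt
      apply hpow r d
      unfold X at he
      have h1 : x r * q ^ m ≠ 0 := mul_ne_zero h0 (pow_ne_zero _ hq)
      apply mul_left_cancel₀ h1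
      rw [mul_one]
      linear_combination -he
    rcases lt_or_gt_of_ne hmn with h1 | h1
    · exact key _ _ h1 he
    · exact key _ _ h1 he.symm
  · apply hsucc r s m (n + 1) hrs
    unfold X at *
    linear_combination q * he

lemma expo (n : ℕ) : ((n : ℤ) * ((n : ℤ) - 1) / 2) = ((n.choose 2 : ℕ) : ℤ) := by
  rw [Nat.choose_two_right]
  cases n with
  | zero => simp
  | succ n => push_cast; simp

lemma list_prod (n : ℕ) (f : ℕ → ℂ) : ((List.range n).map f).prod = ∏ m ∈ Finset.range n, f m := by
  induction n with
  | zero => simp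
  | succ n ih => rw [List.prod_range_succ, ih, Finset.prod_range_succ]

section
variable {a xl : ℂ}

lemma qp_ratio (hq : q ≠ 0) (ha : a ≠ 0) (hxl : xl ≠ 0) (k : Fin ℓ) (t S n : ℕ)
    (h0 : qp (a * q * (x k / xl)) q ((t : ℤ) + (S : ℤ)) ≠ 0) :
    qp (a * q * (x k / xl)) q ((t : ℤ) + ((S + n + 1 : ℕ) : ℤ) - 1) *
      (qp (a * q * (x k / xl)) q ((t : ℤ) + (S : ℤ)))⁻¹ =
    ∏ m ∈ Finset.range n, (a * q ^ (1 + S + m) / xl * ((a * q ^ (1 + S + m) / xl)⁻¹ - X q x k t)) := by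
  rw [show ((t : ℤ) + ((S + n + 1 : ℕ) : ℤ) - 1) = ((t + S + n : ℕ) : ℤ) by push_cast; ring]
  rw [show ((t : ℤ) + (S : ℤ)) = ((t + S : ℕ) : ℤ) by push_cast; ring] at *
  rw [← div_eq_mul_inv, div_eq_iff h0, qp_nat, qp_nat, Finset.prod_range_add, mul_comm]
  congr 1
  refine Finset.prod_congr rfl fun m _ => ?_
  unfold X
  field_simp
  ring

lemma ortho (h : ND q x) (ha : a ≠ 0) (hxl : xl ≠ 0)
    (hd2 : ∀ i j : Fin ℓ → ℕ, (∀ k, j k ≤ i k) → ∀ k : Fin ℓ,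
      qp (a * q * (x k / xl)) q ((i k : ℤ) + ∑ s, (j s : ℤ)) ≠ 0)
    (i j : Fin ℓ → ℕ) (hji : j ≤ i) (hne : j ≠ i) :
    ∑ y ∈ Finset.Icc j i, MAstar ℓ q a x xl i y * MA ℓ q a x xl y j = 0 := by
  have hlt : ∑ s, j s < ∑ s, i s := by
    refine lt_of_le_of_ne (Finset.sum_le_sum fun s _ => hji s) fun he => hne ?_
    have h1 := (Finset.sum_eq_sum_iff_of_le (s := Finset.univ) (fun s _ => hji s)).1 he
    exact funext fun s => h1 s (Finset.mem_univ s)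
  obtain ⟨n, hn⟩ := Nat.exists_eq_add_of_lt hlt
  have hD := D_list h ((List.range n).map fun m => (a * q ^ (1 + ∑ s, j s + m) / xl)⁻¹) i j
    (by simp; omega)
  unfold D at hD
  set K : ℂ := (∏ k, (1 - a * (x k / xl) * q ^ ((i k : ℤ) + ∑ s, (i s : ℤ)))) *
    ∏ _k : Fin ℓ, ∏ m ∈ Finset.range n, (a * q ^ (1 + ∑ s, j s + m) / xl) with hK
  have : ∀ y ∈ Finset.Icc j i, MAstar ℓ q a x xl i y * MA ℓ q a x xl y j =
      K * (c q x i j y * (((List.range n).map fun m => (a * q ^ (1 + ∑ s, j s + m) / xl)⁻¹).map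
        fun u => ∏ s, (u - X q x s (y s))).prod) := by
    intro y hy
    obtain ⟨hjy, hyi⟩ := Finset.mem_Icc.1 hy
    have hsy : ∑ s, y s ≤ ∑ s, i s := Finset.sum_le_sum fun s _ => hyi s
    have hr : (∏ k, qp (a * q * (x k / xl)) q ((y k : ℤ) + (∑ s, (i s : ℤ)) - 1)) *
        ∏ k, (qp (a * q * (x k / xl)) q ((y k : ℤ) + ∑ s, (j s : ℤ)))⁻¹ =
        (∏ _k : Fin ℓ, ∏ m ∈ Finset.range n, (a * q ^ (1 + ∑ s, j s + m) / xl)) *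
        ((((List.range n).map fun m => (a * q ^ (1 + ∑ s, j s + m) / xl)⁻¹).map
        fun u => ∏ s, (u - X q x s (y s))).prod) := by
      rw [List.map_map, list_prod]
      simp only [Function.comp_apply]
      rw [Finset.prod_comm (s := Finset.range n), ← Finset.prod_mul_distrib,
        ← Finset.prod_mul_distrib]
      refine Finset.prod_congr rfl fun k _ => ?_
      rw [← Finset.prod_mul_distrib]
      have h2 := hd2 y j hjy k
      have e1 : ∑ s, (j s : ℤ) = ((∑ s, j s : ℕ) : ℤ) := by push_cast; rfl
      have e2 : ∑ s, (i s : ℤ) = ((∑ s, j s + n + 1 : ℕ) : ℤ) := by rw [← hn]; push_cast; rfl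
      rw [e1] at h2
      rw [e1, e2]
      exact qp_ratio h.1 ha hxl k _ _ n h2
    unfold MAstar MA
    rw [qp_P h.1 h.2.1 i y hyi, qp_P h.1 h.2.1 y j hjy]
    have e3 : ∑ s, (i s : ℤ) - ∑ s, (y s : ℤ) = ((∑ s, i s - ∑ s, y s : ℕ) : ℤ) := by
      rw [Nat.cast_sub hsy]; push_cast; rfl
    rw [e3, expo, zpow_natCast, zpow_natCast, hK]
    unfold c
    linear_combination ((∏ k, (1 - a * (x k / xl) * q ^ ((i k : ℤ) + ∑ s, (i s : ℤ)))) *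
      ((P q x i y)⁻¹ * (P q x y j)⁻¹ * (-1) ^ (∑ s, i s - ∑ s, y s)
        * q ^ ((∑ s, i s - ∑ s, y s).choose 2))) * hr
  rw [Finset.sum_congr rfl this, ← Finset.mul_sum, hD, mul_zero]

lemma diag (h : ND q x)
    (hd2 : ∀ i j : Fin ℓ → ℕ, (∀ k, j k ≤ i k) → ∀ k : Fin ℓ,
      qp (a * q * (x k / xl)) q ((i k : ℤ) + ∑ s, (j s : ℤ)) ≠ 0)
    (hd3 : ∀ k : Fin ℓ, (1 : ℂ) - a * (x k / xl) ≠ 0) (i : Fin ℓ → ℕ) :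
    MAstar ℓ q a x xl i i * MA ℓ q a x xl i i = 1 := by
  unfold MAstar MA
  rw [qp_P h.1 h.2.1 i i le_rfl, P_self]
  simp only [sub_self, zero_mul, zpow_zero, mul_one, inv_one, one_mul, Int.zero_ediv]
  rw [← Finset.prod_mul_distrib, ← Finset.prod_mul_distrib]
  refine Finset.prod_eq_one fun k _ => ?_
  have h2 := hd2 i i (fun _ => le_rfl) k
  rw [← div_eq_mul_inv, div_eq_one_iff_eq h2]
  rw [show (i k : ℤ) + ∑ s, (i s : ℤ) = ((i k + ∑ s, i s : ℕ) : ℤ) by push_cast; rfl]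
  generalize i k + ∑ s, i s = m
  cases m with
  | zero =>
    have := hd3 k
    have hq := h.1
    have e : a * q * (x k / xl) * q⁻¹ = a * (x k / xl) := by field_simp
    simp [qp, e]
    exact mul_inv_cancel₀ this
  | succ m =>
    rw [qp_succ, show (((m + 1 : ℕ) : ℤ) - 1) = (m : ℤ) by push_cast; ring, zpow_natCast, pow_succ]
    ring

end

lemma invert (M S : (Fin ℓ → ℕ) → (Fin ℓ → ℕ) → ℂ)
    (hdiag : ∀ i, S i i * M i i = 1)
    (ho : ∀ i j, j ≤ i → j ≠ i → ∑ y ∈ Finset.Icc j i, S i y * M y j = 0)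
    (A B : (Fin ℓ → ℕ) → ℂ) :
    (∀ N, B N = ∑ y ∈ Finset.Icc 0 N, M N y * A y) ↔
      (∀ N, A N = ∑ y ∈ Finset.Icc 0 N, S N y * B y) := by
  have fwd : ∀ B : (Fin ℓ → ℕ) → ℂ, (∀ N, B N = ∑ y ∈ Finset.Icc 0 N, M N y * A y) →
      (∀ N, A N = ∑ y ∈ Finset.Icc 0 N, S N y * B y) := by
    intro B hB N
    simp only [hB, Finset.mul_sum]
    rw [Finset.sum_comm' (t' := Finset.Icc 0 N) (s' := fun j => Finset.Icc j N)]
    · rw [Finset.sum_eq_single N]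
      · simp [← mul_assoc, hdiag]
      · intro j hj hjN
        simp only [← mul_assoc, ← Finset.sum_mul]
        rw [ho N j (Finset.mem_Icc.1 hj).2 hjN, zero_mul]
      · intro hN
        exact absurd (Finset.mem_Icc.2 ⟨zero_le, le_rfl⟩) hN
    · intro y j
      simp only [Finset.mem_Icc]
      constructor
      · rintro ⟨⟨h1, h2⟩, h3, h4⟩
        exact ⟨⟨h4, h2⟩, h3, h4.trans h2⟩
      · rintro ⟨⟨h1, h2⟩, h3, h4⟩
        exact ⟨⟨h3.trans h1, h2⟩, h3, h1⟩
  refine ⟨fwd B, fun hA => ?_⟩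
  have h' := fwd _ (fun N => rfl)
  suffices H : ∀ n : ℕ, ∀ N : Fin ℓ → ℕ, ∑ s, N s = n →
      B N = ∑ y ∈ Finset.Icc 0 N, M N y * A y from fun N => H _ N rfl
  intro n
  induction n using Nat.strong_induction_on with
  | _ n ih =>
    intro N hN
    have h1 := h' N
    rw [hA N] at h1
    have hmem : N ∈ Finset.Icc 0 N := Finset.mem_Icc.2 ⟨zero_le, le_rfl⟩
    rw [← Finset.add_sum_erase _ _ hmem, ← Finset.add_sum_erase _ _ hmem] at h1
    have h2 : ∑ y ∈ (Finset.Icc 0 N).erase N, S N y * B y =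
        ∑ y ∈ (Finset.Icc 0 N).erase N, S N y * ∑ z ∈ Finset.Icc 0 y, M y z * A z := by
      refine Finset.sum_congr rfl fun y hy => ?_
      obtain ⟨hne, hy⟩ := Finset.mem_erase.1 hy
      have hle := (Finset.mem_Icc.1 hy).2
      rw [ih (∑ s, y s) ?_ y rfl]
      rw [← hN]
      refine lt_of_le_of_ne (Finset.sum_le_sum fun s _ => hle s) fun he => hne ?_
      have h1 := (Finset.sum_eq_sum_iff_of_le (s := Finset.univ) (fun s _ => hle s)).1 he
      exact funext fun s => h1 s (Finset.mem_univ s)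
    rw [h2] at h1
    exact mul_left_cancel₀ (left_ne_zero_of_mul_eq_one (hdiag N)) (add_right_cancel h1)

end Bailey


/-- **A_ℓ Bailey Pair Inversion.**
`B_N = ∑_{0 ≤ y ≤ N} M(N;y) A_y` for all `N` iff
`A_N = ∑_{0 ≤ y ≤ N} M*(N;y) B_y` for all `N`. -/
theorem Al_bailey_pair_inversion (ℓ : ℕ) (hℓ : 1 ≤ ℓ) (q a : ℂ)
    (hq : q ≠ 0) (ha : a ≠ 0) (x : Fin ℓ → ℂ) (hx : ∀ k, x k ≠ 0)
    (xl : ℂ) (hxl : xl = x ⟨ℓ - 1, by omega⟩)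
    (hd1 : ∀ i j : Fin ℓ → ℕ, (∀ k, j k ≤ i k) → ∀ r s : Fin ℓ,
      qp (q * (x r / x s) * q ^ ((j r : ℤ) - (j s : ℤ))) q ((i r : ℤ) - (j r : ℤ)) ≠ 0)
    (hd2 : ∀ i j : Fin ℓ → ℕ, (∀ k, j k ≤ i k) → ∀ k : Fin ℓ,
      qp (a * q * (x k / xl)) q ((i k : ℤ) + ∑ s, (j s : ℤ)) ≠ 0)
    (hd3 : ∀ k : Fin ℓ, (1 : ℂ) - a * (x k / xl) ≠ 0)
    (A B : (Fin ℓ → ℕ) → ℂ) :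
    (∀ N : Fin ℓ → ℕ, B N = ∑ y ∈ Finset.Icc 0 N, MA ℓ q a x xl N y * A y) ↔
      (∀ N : Fin ℓ → ℕ, A N = ∑ y ∈ Finset.Icc 0 N, MAstar ℓ q a x xl N y * B y) := by
  have h := Bailey.ND_of hq hx hd1
  have hxl0 : xl ≠ 0 := by rw [hxl]; exact hx _
  exact Bailey.invert _ _ (Bailey.diag h hd2 hd3) (Bailey.ortho h ha hxl0 hd2) A B
end

section
/- (C_ℓ Bailey Pair Inversion.) Let ℓ ≥ 1, let q, x_1, …, x_ℓ be nonzero complex numbers such that every q-shifted factorial occurring in a denominator below is nonzero. Let M and M* be the C_ℓ Bailey transform matrices: M(i;j) := ∏_{r,s=1}^{ℓ} [ ((q x_r/x_s) q^{j_r−j_s}; q)_{i_r−j_r}^{−1} · (q x_r x_s q^{j_r+j_s}; q)_{i_r−j_r}^{−1} ], and M*(i;j) := ∏_{r,s=1}^{ℓ} [ ((q x_r/x_s) q^{j_r−j_s}; q)_{i_r−j_r}^{−1} · (x_r x_s q^{j_r+i_s}; q)_{i_r−j_r}^{−1} ] · ∏_{1≤r<s≤ℓ} (1 − x_r x_s q^{j_r+j_s})/(1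 − x_r x_s q^{i_r+i_s}) · (−1)^{|i|−|j|} q^{binom(|i|−|j|,2)}. Let A = {A_y} and B = {B_y} be sequences of complex numbers indexed by vectors y of nonnegative integers of length ℓ. Then B_N = ∑_{0 ≤ y_k ≤ N_k, k=1,…,ℓ} M(N;y) A_y holds for every vector N of nonnegative integers if and only if A_N = ∑_{0 ≤ y_k ≤ N_k, k=1,…,ℓ} M*(N;y) B_y holds for every vector N of nonnegative integers. -/
set_option autoImplicit false
set_option maxHeartbeats 1000000

open Finset

/-- The `C_ℓ` Bailey transform matrix `M(i;j)`. -/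
noncomputable def MC (ℓ : ℕ) (q : ℂ) (x : Fin ℓ → ℂ) (i j : Fin ℓ → ℕ) : ℂ :=
  ∏ r, ∏ s,
    ((qp (q * (x r / x s) * q ^ ((j r : ℤ) - (j s : ℤ))) q ((i r : ℤ) - (j r : ℤ)))⁻¹ *
     (qp (q * (x r * x s) * q ^ ((j r : ℤ) + (j s : ℤ))) q ((i r : ℤ) - (j r : ℤ)))⁻¹)

/-- The `C_ℓ` Bailey transform matrix `M*(i;j)`. -/
noncomputable def MCstar (ℓ : ℕ) (q : ℂ) (x : Fin ℓ → ℂ) (i j : Fin ℓ → ℕ) : ℂ :=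
  (∏ r, ∏ s,
    ((qp (q * (x r / x s) * q ^ ((j r : ℤ) - (j s : ℤ))) q ((i r : ℤ) - (j r : ℤ)))⁻¹ *
     (qp ((x r * x s) * q ^ ((j r : ℤ) + (i s : ℤ))) q ((i r : ℤ) - (j r : ℤ)))⁻¹)) *
  (∏ r, ∏ s, if r < s then
      (1 - x r * x s * q ^ ((j r : ℤ) + (j s : ℤ))) /
        (1 - x r * x s * q ^ ((i r : ℤ) + (i s : ℤ)))
    else 1) *
  (-1 : ℂ) ^ ((∑ s, (i s : ℤ)) - ∑ s, (j s : ℤ)) *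
  q ^ (((∑ s, (i s : ℤ)) - ∑ s, (j s : ℤ)) *
        ((∑ s, (i s : ℤ)) - (∑ s, (j s : ℤ)) - 1) / 2)

/-- finite q-shifted factorial -/
noncomputable def Pn (q a : ℂ) (n : ℕ) : ℂ := ∏ k ∈ Finset.range n, (1 - a * q ^ k)

lemma qp_nat (a q : ℂ) (n : ℕ) : qp a q (n : ℤ) = Pn q a n := by
  simp [qp, Pn]

lemma Pn_add (q a : ℂ) (m n : ℕ) : Pn q a (m + n) = Pn q a m * Pn q (a * q ^ m) n := by
  unfold Pn
  rw [Finset.prod_range_add]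
  congr 1
  apply Finset.prod_congr rfl
  intros; ring

lemma Pn_succ' (q a : ℂ) (n : ℕ) : Pn q a (n + 1) = (1 - a) * Pn q (q * a) n := by
  rw [add_comm, Pn_add]; simp [Pn, mul_comm]

lemma Pn_ne {q a : ℂ} {n : ℕ} (h : ∀ k, a * q ^ k ≠ 1) : Pn q a n ≠ 0 := by
  unfold Pn
  rw [Finset.prod_ne_zero_iff]
  intro k _ h0
  exact h k (sub_eq_zero.mp h0).symm

lemma core_id (q x t : ℂ) (a : ℕ) (hne : ∀ b : ℕ, x * q ^ a ≠ t * q ^ b) (b : ℕ) :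
    (∏ k ∈ range (b + 1), (x * q ^ a - t * q ^ k)) * ∏ k ∈ range (a + 1), (t * q ^ b - x * q ^ k)
    = (∏ k ∈ range a, (t - x * q ^ (k + 1))) * (∏ k ∈ range b, (x - t * q ^ (k + 1))) *
      (x * q ^ a - t * q ^ b) * (t - x) * q ^ (a * b) := by
  induction b with
  | zero => rw [Finset.prod_range_succ' _ a]; simp; ring
  | succ b ih =>
    have h1 : (∏ k ∈ range (a + 1), (t * q ^ (b + 1) - x * q ^ k)) * (t * q ^ b - x * q ^ a)
        = (t * q ^ (b + 1) - x) * q ^ a * ∏ k ∈ range (a + 1), (t * q ^ b - x * q ^ k) := by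
      rw [Finset.prod_range_succ', Finset.prod_range_succ _ a]
      have : ∏ k ∈ range a, (t * q ^ (b + 1) - x * q ^ (k + 1))
          = q ^ a * ∏ k ∈ range a, (t * q ^ b - x * q ^ k) := by
        rw [← Finset.card_range a, ← Finset.prod_const, Finset.card_range, ← Finset.prod_mul_distrib]
        apply Finset.prod_congr rfl
        intros; ring
      rw [this]; ring
    have h0 : t * q ^ b - x * q ^ a ≠ 0 := sub_ne_zero.mpr (hne b).symm
    apply mul_right_cancel₀ h0
    rw [mul_assoc, h1, Finset.prod_range_succ (fun k => x * q ^ a - t * q ^ k) (b + 1),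
      Finset.prod_range_succ (fun k => x - t * q ^ (k + 1)) b]
    generalize ∏ k ∈ range (b + 1), (x * q ^ a - t * q ^ k) = U1 at *
    generalize ∏ k ∈ range (a + 1), (t * q ^ b - x * q ^ k) = U2 at *
    generalize ∏ k ∈ range a, (t - x * q ^ (k + 1)) = U3 at *
    generalize ∏ k ∈ range b, (x - t * q ^ (k + 1)) = U4 at *
    linear_combination (x * q ^ a - t * q ^ (b + 1)) * (t * q ^ (b + 1) - x) * q ^ a * ih

lemma prod_split (q z t : ℂ) (hz : z ≠ 0) (b n' : ℕ) :
    ∏ k ∈ range (b + n' + 1), (z - t * q ^ k) =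
      (∏ k ∈ range (b + 1), (z - t * q ^ k)) * (z ^ n' * Pn q (q * (t * q ^ b / z)) n') := by
  rw [show b + n' + 1 = (b + 1) + n' by ring, Finset.prod_range_add]
  congr 1
  unfold Pn
  rw [← Finset.card_range n', ← Finset.prod_const, Finset.card_range, ← Finset.prod_mul_distrib]
  apply Finset.prod_congr rfl
  intros; field_simp; ring

lemma Pn_mul_pow (q x t : ℂ) (ht : t ≠ 0) (a : ℕ) :
    ∏ k ∈ range a, (t - x * q ^ (k + 1)) = t ^ a * Pn q (q * (x / t)) a := by
  unfold Pn
  rw [← Finset.card_range a, ← Finset.prod_const, Finset.card_range, ← Finset.prod_mul_distrib]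
  apply Finset.prod_congr rfl
  intros; field_simp; ring

/-- claim B -/
lemma claimB (q x t : ℂ) (hq : q ≠ 0) (hx : x ≠ 0) (ht : t ≠ 0)
    (hne : ∀ a b : ℕ, x * q ^ a ≠ t * q ^ b) (a b m' n' : ℕ) :
    (∏ k ∈ range (b + n' + 1), (x * q ^ a - t * q ^ k)) *
      (∏ k ∈ range (a + m' + 1), (t * q ^ b - x * q ^ k)) * q ^ (m' * n') =
    Pn q (q * (x * q ^ a / (t * q ^ b))) m' * Pn q (q * (t * q ^ b / (x * q ^ a))) n' *
    Pn q (q * (x / t)) a * Pn q (q * (t / x)) b * (x * q ^ a - t * q ^ b) *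
    ((t - x) * t ^ (a + m') * x ^ (b + n') * q ^ ((a + m') * (b + n'))) := by
  have hz : x * q ^ a ≠ 0 := mul_ne_zero hx (pow_ne_zero _ hq)
  have hv : t * q ^ b ≠ 0 := mul_ne_zero ht (pow_ne_zero _ hq)
  rw [prod_split q _ t hz, prod_split q _ x hv]
  have := core_id q x t a (hne a) b
  rw [Pn_mul_pow q x t ht, Pn_mul_pow q t x hx] at this
  generalize Pn q (q * (x * q ^ a / (t * q ^ b))) m' = Q1 at *
  generalize Pn q (q * (t * q ^ b / (x * q ^ a))) n' = Q2 at *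
  linear_combination ((x * q ^ a) ^ n' * Q2 * (t * q ^ b) ^ m' * Q1 * q ^ (m' * n')) * this

/-- claim A -/
lemma claimA (q p : ℂ) (hp : ∀ k : ℕ, p * q ^ k ≠ 1) (a m' n : ℕ) :
    Pn q (p * q ^ (a + n)) m' * Pn q (q * p) a * (Pn q (p * q ^ a) n / (1 - p * q ^ a)) =
      Pn q (p * q ^ n) (a + m') * (Pn q p n / (1 - p)) := by
  have h0 : 1 - p ≠ 0 := by have := hp 0; simp at this; exact sub_ne_zero.mpr (Ne.symm this)
  have h1 : 1 - p * q ^ a ≠ 0 := sub_ne_zero.mpr (hp a).symm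
  have e1 : Pn q (p * q ^ n) (a + m') = Pn q (p * q ^ n) a * Pn q (p * q ^ (a + n)) m' := by
    rw [Pn_add]; ring_nf
  have e2 : Pn q p n * Pn q (p * q ^ n) a = Pn q p a * Pn q (p * q ^ a) n := by
    rw [← Pn_add, ← Pn_add, add_comm]
  have e3 : (1 - p) * Pn q (q * p) a = Pn q p a * (1 - p * q ^ a) := by
    rw [← Pn_succ', Pn_add]; simp [Pn]
  rw [e1]
  generalize Pn q (q * p) a = U at *
  field_simp
  linear_combination Pn q (p * q ^ (a + n)) m' * Pn q (p * q ^ a) n * e3 -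
    Pn q (p * q ^ (a + n)) m' * (1 - p * q ^ a) * e2

/-- diagonal, m ≥ 1 -/
lemma claimA_diag (q p : ℂ) (a m' : ℕ) (h : 1 ≤ a + m') :
    Pn q (p * q ^ (a + (a + m'))) m' * Pn q (q * p) a * (Pn q (q * (p * q ^ a)) (a + m' - 1)) =
      Pn q (p * q ^ (a + m')) (a + m') * (Pn q (q * p) (a + m' - 1)) := by
  obtain ⟨n, hn⟩ : ∃ n, a + m' = n + 1 := ⟨a + m' - 1, by omega⟩
  have e2 := Pn_add q (q * p) a n
  have e3 := Pn_add q (q * p) n a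
  have e1 := Pn_add q (p * q ^ (n + 1)) a m'
  rw [add_comm a n] at e2
  rw [hn] at e1 ⊢
  simp only [Nat.add_sub_cancel]
  rw [e1, show p * q ^ (a + (n + 1)) = p * q ^ (n + 1) * q ^ a by ring,
    show q * (p * q ^ a) = q * p * q ^ a by ring, show p * q ^ (n + 1) = q * p * q ^ n by ring]
  linear_combination Pn q (q * p * q ^ n * q ^ a) m' * (e3 - e2)

lemma diag_prod (q x : ℂ) (a m' : ℕ) :
    (∏ k ∈ (range (a + m' + 1)).erase a, (x * q ^ a - x * q ^ k)) * q ^ (m'.choose 2) =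
      (-1) ^ a * Pn q q a * Pn q q m' * (x ^ (a + m') * q ^ ((a + m').choose 2)) := by
  have hs : (range (a + m' + 1)).erase a = range a ∪ (range m').map (addLeftEmbedding (a + 1)) := by
    ext k
    simp only [mem_erase, mem_range, mem_union, mem_map, addLeftEmbedding_apply]
    constructor
    · intro h
      by_cases hk : k < a
      · exact Or.inl hk
      · exact Or.inr ⟨k - (a + 1), by omega, by omega⟩
    · rintro (h | ⟨j, hj, rfl⟩) <;> omega
  rw [hs, Finset.prod_union]
  · rw [Finset.prod_map]
    have h2 : ∏ k ∈ range m', (x * q ^ a - x * q ^ ((addLeftEmbedding (a + 1)) k)) =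
        x ^ m' * q ^ (a * m') * Pn q q m' := by
      rw [pow_mul, ← mul_pow]
      unfold Pn
      rw [← Finset.card_range m', ← Finset.prod_const, Finset.card_range, ← Finset.prod_mul_distrib]
      apply Finset.prod_congr rfl
      intros; simp only [addLeftEmbedding_apply]; ring
    have h1 : ∀ a : ℕ, ∏ k ∈ range a, (x * q ^ a - x * q ^ k) = (-1) ^ a * x ^ a * q ^ (a.choose 2) * Pn q q a := by
      intro a
      induction a with
      | zero => simp [Pn]
      | succ a ih =>
        rw [Finset.prod_range_succ']
        have : ∏ k ∈ range a, (x * q ^ (a + 1) - x * q ^ (k + 1)) =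
          q ^ a * ∏ k ∈ range a, (x * q ^ a - x * q ^ k) := by
          have hc : q ^ a = ∏ k ∈ range a, q := by simp
          conv_rhs => rw [hc]
          rw [← Finset.prod_mul_distrib]
          apply Finset.prod_congr rfl
          intros; rw [← hc]; ring
        rw [this, ih, Pn_add, Nat.choose_succ_succ' a 1]
        simp [Pn]
        ring
    have h3 : (a + m').choose 2 = a.choose 2 + a * m' + m'.choose 2 := by
      rw [Nat.add_choose_eq]; 
      simp [Finset.Nat.antidiagonal_succ]; ring
    rw [h1, h2, h3]
    ring
  · rw [Finset.disjoint_left]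
    intro k hk hk'
    simp at hk hk'
    obtain ⟨j, hj, rfl⟩ := hk'
    omega

structure Gen (ℓ : ℕ) (q : ℂ) (x : Fin ℓ → ℂ) : Prop where
  hq : q ≠ 0
  hx : ∀ r, x r ≠ 0
  hq1 : ∀ m : ℕ, q ^ (m + 1) ≠ 1
  hd : ∀ r s, r ≠ s → ∀ a b : ℕ, x r * q ^ a ≠ x s * q ^ b
  hp : ∀ r s, ∀ m : ℕ, x r * x s * q ^ (m + 1) ≠ 1
  hp0 : ∀ r s, r ≠ s → ∀ m : ℕ, x r * x s * q ^ m ≠ 1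

noncomputable def gd (q t : ℂ) (n y : ℕ) : ℂ :=
  Pn q (q * (t * q ^ y * t)) (n - 1) / ∏ k ∈ (range (n + 1)).erase y, (t * q ^ y - t * q ^ k)

noncomputable def ge (q t : ℂ) (n : ℕ) (z : ℂ) : ℂ :=
  z * (Pn q (z * t) n / (1 - z * t)) / ∏ k ∈ range (n + 1), (z - t * q ^ k)

noncomputable def gg (ℓ : ℕ) (q : ℂ) (x : Fin ℓ → ℂ) (n : Fin ℓ → ℕ) (r : Fin ℓ) (y : ℕ) : ℂ :=
  gd q (x r) (n r) y * ∏ s, if s = r then 1 else ge q (x s) (n s) (x r * q ^ y)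

lemma Gen.node_inj {ℓ : ℕ} {q : ℂ} {x : Fin ℓ → ℂ} (h : Gen ℓ q x) {r s : Fin ℓ} {a b : ℕ}
    (e : x r * q ^ a = x s * q ^ b) : r = s ∧ a = b := by
  have hrs : r = s := by
    by_contra hne
    exact h.hd r s hne a b e
  subst hrs
  refine ⟨rfl, ?_⟩
  have e' := mul_left_cancel₀ (h.hx r) e
  by_contra hab
  rcases Nat.lt_or_gt_of_ne hab with hlt | hlt
  · obtain ⟨d, rfl⟩ := Nat.exists_eq_add_of_lt hlt
    apply h.hq1 d
    have : q ^ a * q ^ (d + 1) = q ^ a * 1 := by rw [mul_one, ← pow_add]; exact e'.symm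
    exact mul_left_cancel₀ (pow_ne_zero _ h.hq) this
  · obtain ⟨d, rfl⟩ := Nat.exists_eq_add_of_lt hlt
    apply h.hq1 d
    have : q ^ b * q ^ (d + 1) = q ^ b * 1 := by rw [mul_one, ← pow_add]; exact e'
    exact mul_left_cancel₀ (pow_ne_zero _ h.hq) this

lemma lagr (ℓ : ℕ) (q : ℂ) (x : Fin ℓ → ℂ) (h : Gen ℓ q x) (n : Fin ℓ → ℕ) (S : Finset (Fin ℓ))
    (P : Polynomial ℂ) (hP : P.natDegree + 1 < ∑ s ∈ S, (n s + 1)) :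
    ∑ r ∈ S, ∑ y ∈ range (n r + 1), P.eval (x r * q ^ y) /
      ((∏ k ∈ (range (n r + 1)).erase y, (x r * q ^ y - x r * q ^ k)) *
        ∏ s ∈ S.erase r, ∏ k ∈ range (n s + 1), (x r * q ^ y - x s * q ^ k)) = 0 := by
  classical
  set T : Finset (Σ _ : Fin ℓ, ℕ) := S.sigma (fun r => range (n r + 1)) with hT
  have hc : #T = ∑ s ∈ S, (n s + 1) := by simp [hT]
  have hinj : Set.InjOn (fun p : (Σ _ : Fin ℓ, ℕ) => x p.1 * q ^ p.2) T := by
    rintro ⟨r, a⟩ _ ⟨s, b⟩ _ e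
    obtain ⟨rfl, rfl⟩ := h.node_inj e
    rfl
  have hdeg : P.degree < #T := by
    refine lt_of_le_of_lt Polynomial.degree_le_natDegree ?_
    rw [hc]
    exact_mod_cast (by omega)
  have key := Lagrange.coeff_eq_sum hinj hdeg
  rw [Polynomial.coeff_eq_zero_of_natDegree_lt (by omega)] at key
  rw [key, hT, Finset.sum_sigma]
  apply Finset.sum_congr rfl
  intro r hr
  apply Finset.sum_congr rfl
  intro y hy
  congr 1
  rw [← hT]
  have : T.erase ⟨r, y⟩ = (({r} : Finset (Fin ℓ)).sigma (fun _ => (range (n r + 1)).erase y)) ∪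
      ((S.erase r).sigma (fun s => range (n s + 1))) := by
    ext ⟨s, k⟩
    simp only [hT, mem_erase, mem_sigma, mem_union, mem_singleton, ne_eq, Sigma.mk.injEq, heq_eq_eq]
    by_cases hs : s = r
    · subst hs; simp [hr]
    · simp [hs]
  rw [this, Finset.prod_union, Finset.prod_sigma, Finset.prod_sigma, Finset.prod_singleton]
  rw [Finset.disjoint_left]
  rintro ⟨s, k⟩ h1 h2
  simp at h1 h2
  exact h2.1.1 h1.1

lemma prod_ite_erase {ℓ : ℕ} (r : Fin ℓ) (f : Fin ℓ → ℂ) :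
    (∏ s, if s = r then 1 else f s) = ∏ s ∈ univ.erase r, f s := by
  rw [← Finset.mul_prod_erase univ _ (mem_univ r)]
  simp only [if_true, one_mul]
  apply Finset.prod_congr rfl
  intro s hs
  rw [if_neg (Finset.ne_of_mem_erase hs)]

noncomputable def ww (z : ℂ) : ℂ := z + z⁻¹

lemma ge_zero (q t z : ℂ) (ht : t ≠ 0) (hz : z ≠ 0) (h1 : z ≠ t) (h2 : z * t ≠ 1) :
    ge q t 0 z * (ww z - ww t) = - t⁻¹ := by
  have a1 : z - t ≠ 0 := sub_ne_zero.mpr h1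
  have a2 : 1 - z * t ≠ 0 := sub_ne_zero.mpr h2.symm
  simp only [ge, Pn, ww]
  simp
  field_simp
  ring

lemma ge_pos (q t z : ℂ) (n : ℕ) (hn : n ≠ 0) (h2 : z * t ≠ 1) :
    ge q t n z = z * Pn q (q * (z * t)) (n - 1) / ∏ k ∈ range (n + 1), (z - t * q ^ k) := by
  have a2 : 1 - z * t ≠ 0 := sub_ne_zero.mpr h2.symm
  obtain ⟨m, rfl⟩ := Nat.exists_eq_succ_of_ne_zero hn
  simp only [ge, Nat.succ_eq_add_one, Pn_succ', Nat.add_sub_cancel]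
  rw [mul_div_cancel_left₀ _ a2]

/-- Key vanishing on monomials. -/
lemma key_mono (ℓ : ℕ) (q : ℂ) (x : Fin ℓ → ℂ) (h : Gen ℓ q x) (n : Fin ℓ → ℕ) (S : Finset (Fin ℓ))
    (hS : ∀ s, s ∈ S ↔ n s ≠ 0) (k : ℕ) (hk : k < #S) :
    ∑ r ∈ S, ∑ y ∈ range (n r + 1), gg ℓ q x n r y *
      ((∏ s ∈ Sᶜ, (ww (x r * q ^ y) - ww (x s))) * ww (x r * q ^ y) ^ k) = 0 := by
  classical
  set P : Polynomial ℂ := (Polynomial.X ^ (#S - 1 - k) * (Polynomial.X ^ 2 + 1) ^ k) *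
    ∏ s ∈ S, ∏ j ∈ range (n s - 1), (1 - Polynomial.C (q * x s * q ^ j) * Polynomial.X) with hPdef
  have hdeg : P.natDegree ≤ (#S - 1 - k) + 2 * k + ∑ s ∈ S, (n s - 1) := by
    rw [hPdef]
    refine Polynomial.natDegree_mul_le_of_le (Polynomial.natDegree_mul_le_of_le ?_ ?_) ?_
    · simp
    · rw [mul_comm 2 k]
      refine Polynomial.natDegree_pow_le_of_le k ?_
      compute_degree
    · refine (Polynomial.natDegree_prod_le _ _).trans (Finset.sum_le_sum fun s _ => ?_)
      refine (Polynomial.natDegree_prod_le _ _).trans ?_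
      refine (Finset.sum_le_card_nsmul _ _ 1 ?_).trans (by simp)
      intro j _
      compute_degree
  have hsum : ∑ s ∈ S, (n s - 1) + 2 * #S = ∑ s ∈ S, (n s + 1) := by
    rw [Finset.card_eq_sum_ones, Finset.mul_sum, ← Finset.sum_add_distrib]
    apply Finset.sum_congr rfl
    intro s hs
    have := (hS s).1 hs
    omega
  have L := lagr ℓ q x h n S P (by omega)
  have : ∀ r ∈ S, ∀ y ∈ range (n r + 1), gg ℓ q x n r y *
      ((∏ s ∈ Sᶜ, (ww (x r * q ^ y) - ww (x s))) * ww (x r * q ^ y) ^ k) =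
      (∏ s ∈ Sᶜ, (-(x s)⁻¹)) * (P.eval (x r * q ^ y) /
      ((∏ k ∈ (range (n r + 1)).erase y, (x r * q ^ y - x r * q ^ k)) *
        ∏ s ∈ S.erase r, ∏ k ∈ range (n s + 1), (x r * q ^ y - x s * q ^ k))) := by
    intro r hr y hy
    have hz : x r * q ^ y ≠ 0 := mul_ne_zero (h.hx r) (pow_ne_zero _ h.hq)
    have hn2 : ∀ s, s ≠ r → x r * q ^ y * x s ≠ 1 := by
      intro s hs e
      apply h.hp0 r s hs.symm y
      rw [← e]; ring
    have hsplit : univ.erase r = Sᶜ ∪ S.erase r := by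
      ext s
      simp only [mem_erase, mem_univ, mem_union, mem_compl]
      by_cases hs : s ∈ S
      · simp [hs]
      · have : s ≠ r := fun e => hs (e ▸ hr)
        simp [hs, this]
    have hdisj : Disjoint Sᶜ (S.erase r) := by
      rw [Finset.disjoint_left]
      intro s h1 h2
      exact (mem_compl.1 h1) (mem_of_mem_erase h2)
    rw [gg, prod_ite_erase, hsplit, Finset.prod_union hdisj]
    have e1 : (∏ s ∈ Sᶜ, ge q (x s) (n s) (x r * q ^ y)) * ∏ s ∈ Sᶜ, (ww (x r * q ^ y) - ww (x s)) =
        ∏ s ∈ Sᶜ, (-(x s)⁻¹) := by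
      rw [← Finset.prod_mul_distrib]
      apply Finset.prod_congr rfl
      intro s hs
      have hs' : n s = 0 := by
        have := (hS s).not.1 (mem_compl.1 hs); simpa using this
      have hsr : s ≠ r := fun e => mem_compl.1 hs (e ▸ hr)
      rw [hs']
      apply ge_zero _ _ _ (h.hx s) hz _ (hn2 s hsr)
      have := h.hd r s hsr.symm y 0
      simpa using this
    have e2 : ∏ s ∈ S.erase r, ge q (x s) (n s) (x r * q ^ y) =
        (x r * q ^ y) ^ (#S - 1) * (∏ s ∈ S.erase r, Pn q (q * (x r * q ^ y * x s)) (n s - 1)) /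
          ∏ s ∈ S.erase r, ∏ k ∈ range (n s + 1), (x r * q ^ y - x s * q ^ k) := by
      rw [← Finset.card_erase_of_mem hr, ← Finset.prod_const, ← Finset.prod_mul_distrib,
        ← Finset.prod_div_distrib]
      apply Finset.prod_congr rfl
      intro s hs
      exact ge_pos _ _ _ _ ((hS s).1 (mem_of_mem_erase hs)) (hn2 s (ne_of_mem_erase hs))
    have e3 : P.eval (x r * q ^ y) = (x r * q ^ y) ^ (#S - 1) * ww (x r * q ^ y) ^ k *
        (Pn q (q * (x r * q ^ y * x r)) (n r - 1) *
          ∏ s ∈ S.erase r, Pn q (q * (x r * q ^ y * x s)) (n s - 1)) := by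
      rw [Finset.mul_prod_erase S (fun s => Pn q (q * (x r * q ^ y * x s)) (n s - 1)) hr, hPdef]
      simp only [Polynomial.eval_mul, Polynomial.eval_pow, Polynomial.eval_X, Polynomial.eval_add,
        Polynomial.eval_one, Polynomial.eval_prod, Polynomial.eval_sub, Polynomial.eval_C]
      congr 1
      · have : #S - 1 = (#S - 1 - k) + k := by omega
        conv_rhs => rw [this, pow_add, mul_assoc, ← mul_pow]
        congr 2
        simp only [ww]
        generalize x r * q ^ y = z at *
        field_simp
      · apply Finset.prod_congr rfl
        intro s _
        unfold Pn
        apply Finset.prod_congr rfl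
        intros; ring
    rw [e2, e3, gd, ← e1]
    simp only [div_eq_mul_inv, mul_inv]
    ring
  rw [Finset.sum_congr rfl (fun r hr => Finset.sum_congr rfl (this r hr))]
  simp_rw [← Finset.mul_sum]
  rw [L, mul_zero]

lemma ww_inj {a b : ℂ} (ha : a ≠ 0) (hb : b ≠ 0) (h1 : a * b ≠ 1) (h : ww a = ww b) : a = b := by
  unfold ww at h
  have a2 : 1 - a * b ≠ 0 := sub_ne_zero.mpr h1.symm
  field_simp at h
  have : (a - b) * (1 - a * b) = 0 := by linear_combination -h
  rcases mul_eq_zero.1 this with h | h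
  · exact sub_eq_zero.1 h
  · exact absurd h a2

lemma det_zero (ℓ : ℕ) (q : ℂ) (x : Fin ℓ → ℂ) (h : Gen ℓ q x) (n : Fin ℓ → ℕ) (hn : n ≠ 0) :
    (Matrix.of fun (r k : Fin ℓ) => ∑ y ∈ range (n r + 1),
      gg ℓ q x n r y * ww (x r * q ^ y) ^ (k : ℕ)).det = 0 := by
  classical
  set S : Finset (Fin ℓ) := univ.filter (fun s => n s ≠ 0) with hSdef
  have hS : ∀ s, s ∈ S ↔ n s ≠ 0 := by simp [hSdef]
  obtain ⟨r0, hr0⟩ : ∃ r, n r ≠ 0 := by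
    by_contra hcon
    push Not at hcon
    exact hn (funext hcon)
  by_cases hz : ∃ s, n s = 0 ∧ gg ℓ q x n s 0 = 0
  · obtain ⟨s, hs, hg⟩ := hz
    apply Matrix.det_eq_zero_of_row_eq_zero s
    intro k
    simp [hs, hg]
  push Not at hz
  -- the functional
  let Φ : Polynomial ℂ → ℂ := fun P => ∑ r ∈ S, ∑ y ∈ range (n r + 1),
    gg ℓ q x n r y * P.eval (ww (x r * q ^ y))
  have Φadd : ∀ P Q, Φ (P + Q) = Φ P + Φ Q := by
    intro P Q
    simp only [Φ, Polynomial.eval_add, mul_add, Finset.sum_add_distrib]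
  have ΦC : ∀ (c : ℂ) Q, Φ (Polynomial.C c * Q) = c * Φ Q := by
    intro P Q
    simp only [Φ, Polynomial.eval_mul, Polynomial.eval_C, Finset.mul_sum]
    refine Finset.sum_congr rfl fun _ _ => Finset.sum_congr rfl fun _ _ => ?_
    ring
  have Φsum : ∀ {ι : Type} (T : Finset ι) (f : ι → Polynomial ℂ), Φ (∑ i ∈ T, f i) = ∑ i ∈ T, Φ (f i) := by
    intro ι T f
    induction T using Finset.induction with
    | empty => simp [Φ]
    | insert a T ha ih => rw [Finset.sum_insert ha, Finset.sum_insert ha, Φadd, ih]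
  let D : Polynomial ℂ := Lagrange.nodal Sᶜ (fun s => ww (x s))
  have hDm : D.Monic := Lagrange.nodal_monic
  have hcard : #S + #Sᶜ = ℓ := by rw [Finset.card_add_card_compl]; simp
  have hSpos : 0 < #S := Finset.card_pos.2 ⟨r0, (hS r0).2 hr0⟩
  have ΦD : ∀ Q : Polynomial ℂ, Q.natDegree < #S → Φ (D * Q) = 0 := by
    intro Q hQ
    rw [Q.as_sum_range_C_mul_X_pow' hQ, Finset.mul_sum, Φsum]
    apply Finset.sum_eq_zero
    intro k hk
    rw [show D * (Polynomial.C (Q.coeff k) * Polynomial.X ^ k) =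
      Polynomial.C (Q.coeff k) * (D * Polynomial.X ^ k) by ring, ΦC]
    have := key_mono ℓ q x h n S hS k (mem_range.1 hk)
    simp only [Φ, D, Polynomial.eval_mul, Lagrange.eval_nodal, Polynomial.eval_pow, Polynomial.eval_X]
    rw [this, mul_zero]
  have hinj : Set.InjOn (fun s => ww (x s)) (Sᶜ : Finset (Fin ℓ)) := by
    intro r _ s _ e
    by_contra hrs
    have h1 := h.hp0 r s hrs 0
    have h2 := h.hd r s hrs 0 0
    simp at h1 h2
    exact h2 (ww_inj (h.hx r) (h.hx s) h1 e)
  have hX : ∀ k : ℕ, k < ℓ → Φ (Polynomial.X ^ k) =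
      ∑ s ∈ Sᶜ, ww (x s) ^ k * Φ (Lagrange.basis Sᶜ (fun s => ww (x s)) s) := by
    intro k hk
    have e := Polynomial.modByMonic_add_div (Polynomial.X ^ k : Polynomial ℂ) D
    have hdl : ((Polynomial.X ^ k : Polynomial ℂ) %ₘ D).degree < #Sᶜ := by
      have := Polynomial.degree_modByMonic_lt (Polynomial.X ^ k : Polynomial ℂ) hDm
      rwa [Lagrange.degree_nodal] at this
    have hi := Lagrange.eq_interpolate_of_eval_eq (fun s => ww (x s) ^ k) hinj hdl (by
      intro s hs
      have e' := congrArg (Polynomial.eval (ww (x s))) e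
      have e0 : Polynomial.eval (ww (x s)) D = 0 := Lagrange.eval_nodal_at_node (v := fun s => ww (x s)) hs
      rw [Polynomial.eval_add, Polynomial.eval_mul, e0] at e'
      simpa using e')
    rw [← e, Φadd, ΦD, add_zero, hi, Lagrange.interpolate_apply, Φsum]
    · simp_rw [ΦC]
    · rw [Polynomial.natDegree_divByMonic _ hDm]
      have : D.natDegree = #Sᶜ := Lagrange.natDegree_nodal
      rw [this, Polynomial.natDegree_X_pow]
      omega
  rw [← Matrix.exists_vecMul_eq_zero_iff]
  refine ⟨fun r => if r ∈ S then 1 else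
    -(Φ (Lagrange.basis Sᶜ (fun s => ww (x s)) r) / gg ℓ q x n r 0), ?_, ?_⟩
  · intro h0
    have := congrFun h0 r0
    simp [(hS r0).2 hr0] at this
  · funext k
    simp only [Matrix.vecMul, dotProduct, Matrix.of_apply, Pi.zero_apply]
    rw [← Finset.sum_add_sum_compl S]
    have e1 : ∑ i ∈ S, (if i ∈ S then 1 else
        -(Φ (Lagrange.basis Sᶜ (fun s => ww (x s)) i) / gg ℓ q x n i 0)) *
        ∑ y ∈ range (n i + 1), gg ℓ q x n i y * ww (x i * q ^ y) ^ (k : ℕ) = Φ (Polynomial.X ^ (k : ℕ)) := by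
      simp only [Φ, Polynomial.eval_pow, Polynomial.eval_X]
      apply Finset.sum_congr rfl
      intro i hi
      rw [if_pos hi, one_mul]
    rw [e1, hX k k.2, ← Finset.sum_add_distrib]
    apply Finset.sum_eq_zero
    intro s hs
    have hs' := mem_compl.1 hs
    have hn0 : n s = 0 := by simpa [hS] using hs'
    have := hz s hn0
    rw [if_neg hs', hn0]
    simp
    field_simp
    ring

lemma sum_det (ℓ : ℕ) (n : Fin ℓ → ℕ) (g w : Fin ℓ → ℕ → ℂ) :
    ∑ y ∈ Finset.Icc 0 n, (∏ r, g r (y r)) * (∏ r, ∏ s, if r < s then w s (y s) - w r (y r) else 1) =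
    (Matrix.of fun (r k : Fin ℓ) => ∑ y ∈ range (n r + 1), g r y * w r y ^ (k : ℕ)).det := by
  classical
  have hI : Finset.Icc 0 n = Fintype.piFinset (fun r => range (n r + 1)) := by
    ext y
    simp [Fintype.mem_piFinset, Pi.le_def]
  have hm := (Matrix.detRowAlternating (R := ℂ) (n := Fin ℓ)).toMultilinearMap.map_sum_finset
    (fun r y => (fun k : Fin ℓ => g r y * w r y ^ (k : ℕ))) (fun r => range (n r + 1))
  rw [hI]
  have e1 : (Matrix.of fun (r k : Fin ℓ) => ∑ y ∈ range (n r + 1), g r y * w r y ^ (k : ℕ)) =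
    fun r => ∑ y ∈ range (n r + 1), (fun k : Fin ℓ => g r y * w r y ^ (k : ℕ)) := by
    ext r k
    simp
  rw [e1]
  refine Eq.trans ?_ hm.symm
  apply Finset.sum_congr rfl
  intro y _
  have := Matrix.det_mul_column (fun r => g r (y r)) (Matrix.vandermonde (fun r => w r (y r)))
  rw [Matrix.det_vandermonde] at this
  refine Eq.trans ?_ this.symm
  congr 1
  apply Finset.prod_congr rfl
  intro r _
  rw [← Finset.prod_filter]
  apply Finset.prod_congr
  · ext s; simp
  · intros; rfl

lemma prod_pairs {ℓ : ℕ} (f : Fin ℓ → Fin ℓ → ℂ) :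
    ∏ r, ∏ s, f r s = (∏ r, f r r) * ∏ r, ∏ s, if r < s then f r s * f s r else 1 := by
  have h1 : ∀ r s, f r s = (if r = s then f r r else 1) *
      ((if r < s then f r s else 1) * (if s < r then f r s else 1)) := by
    intro r s
    rcases lt_trichotomy r s with h | h | h
    · simp [h, h.ne, h.not_gt]
    · subst h; simp
    · simp [h, h.ne', h.not_gt]
  have h2 : ∏ r, ∏ s, f r s = ∏ r, ∏ s, ((if r = s then f r r else 1) *
      ((if r < s then f r s else 1) * (if s < r then f r s else 1))) := by
    refine Finset.prod_congr rfl fun r _ => Finset.prod_congr rfl fun s _ => h1 r s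
  rw [h2]
  simp only [Finset.prod_mul_distrib]
  congr 1
  · simp
  · rw [Finset.prod_comm (f := fun r s => if s < r then f r s else 1), ← Finset.prod_mul_distrib]
    refine Finset.prod_congr rfl fun r _ => ?_
    rw [← Finset.prod_mul_distrib]
    refine Finset.prod_congr rfl fun s _ => ?_
    split_ifs <;> simp

lemma prod_offdiag {ℓ : ℕ} (f : Fin ℓ → Fin ℓ → ℂ) :
    (∏ r, ∏ s, if s = r then 1 else f r s) = ∏ r, ∏ s, if r < s then f r s * f s r else 1 := by
  rw [prod_pairs]
  simp only [if_true, Finset.prod_const_one, one_mul]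
  refine Finset.prod_congr rfl fun r _ => Finset.prod_congr rfl fun s _ => ?_
  by_cases h : r < s
  · rw [if_pos h, if_pos h, if_neg h.ne', if_neg h.ne]
  · rw [if_neg h, if_neg h]

lemma choose_pairs (ℓ : ℕ) (d : Fin ℓ → ℕ) :
    (∑ r, d r).choose 2 = (∑ r, (d r).choose 2) + ∑ r, ∑ s, if r < s then d r * d s else 0 := by
  induction ℓ with
  | zero => simp
  | succ ℓ ih =>
    have h3 : ∀ a m : ℕ, (a + m).choose 2 = a.choose 2 + a * m + m.choose 2 := by
      intro a m
      rw [Nat.add_choose_eq]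
      simp [Finset.Nat.antidiagonal_succ]; ring
    rw [Fin.sum_univ_succ, Fin.sum_univ_succ (fun r => (d r).choose 2),
      Fin.sum_univ_succ (fun r => ∑ s, if r < s then d r * d s else 0), h3, ih]
    simp only [Fin.sum_univ_succ (n := ℓ) (fun s => if (_ : Fin (ℓ+1)) < s then _ else 0)]
    simp only [Fin.succ_lt_succ_iff, Fin.succ_pos, if_true, lt_irrefl, if_false, zero_add,
      Fin.not_lt_zero, Finset.mul_sum]
    ring

lemma pow_choose_pairs (q : ℂ) (ℓ : ℕ) (d : Fin ℓ → ℕ) :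
    q ^ ((∑ r, d r).choose 2) = (∏ r, q ^ ((d r).choose 2)) *
      ∏ r, ∏ s, if r < s then q ^ (d r * d s) else 1 := by
  rw [choose_pairs, pow_add, ← Finset.prod_pow_eq_pow_sum, ← Finset.prod_pow_eq_pow_sum]
  congr 1
  refine Finset.prod_congr rfl fun r _ => ?_
  rw [← Finset.prod_pow_eq_pow_sum]
  refine Finset.prod_congr rfl fun s _ => ?_
  split_ifs <;> simp

lemma diag_id (q x : ℂ) (hq : q ≠ 0) (hx : x ≠ 0) (hq1 : ∀ m : ℕ, q ^ (m + 1) ≠ 1)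
    (hp : ∀ m : ℕ, x * x * q ^ (m + 1) ≠ 1) (a m' : ℕ) :
    ((Pn q (q * (x * q ^ a / (x * q ^ a))) m')⁻¹ * (Pn q (x * q ^ a * x * q ^ (a + m')) m')⁻¹ *
      ((Pn q (q * (x / x)) a)⁻¹ * (Pn q (q * (x * x)) a)⁻¹)) * ((-1) ^ m' * q ^ (m'.choose 2)) =
    ((-1) ^ (a + m') * x ^ (a + m') * q ^ ((a + m').choose 2) /
      (Pn q (x * x * q ^ (a + m')) (a + m') * Pn q (q * (x * x)) (a + m' - 1))) *
      gd q x (a + m') a := by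
  have hz : x * q ^ a ≠ 0 := mul_ne_zero hx (pow_ne_zero _ hq)
  rw [div_self hz, div_self hx, mul_one]
  rcases Nat.eq_zero_or_pos (a + m') with h0 | h0
  · obtain ⟨rfl, rfl⟩ : a = 0 ∧ m' = 0 := by omega
    simp [gd, Pn]
  have hA := claimA_diag q (x * x) a m' h0
  have hB := diag_prod q x a m'
  rw [gd]
  have n0 : ∀ k, Pn q q k ≠ 0 := fun k => Pn_ne (fun j => by rw [← pow_succ']; exact hq1 j)
  have n1 : Pn q (x * x * q ^ (a + m')) (a + m') ≠ 0 := Pn_ne (fun j => by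
    have := hp (a + m' - 1 + j)
    rwa [show a + m' - 1 + j + 1 = a + m' + j by omega, pow_add, ← mul_assoc] at this)
  have n2 : ∀ k, Pn q (q * (x * x)) k ≠ 0 := fun k => Pn_ne (fun j => by
    have := hp j
    rwa [show q * (x * x) * q ^ j = x * x * q ^ (j + 1) by ring])
  have n3 : Pn q (x * x * q ^ (a + (a + m'))) m' ≠ 0 := Pn_ne (fun j => by
    have := hp (a + (a + m') - 1 + j)
    rwa [show a + (a + m') - 1 + j + 1 = a + (a + m') + j by omega, pow_add, ← mul_assoc] at this)
  have n4 : ∏ k ∈ (range (a + m' + 1)).erase a, (x * q ^ a - x * q ^ k) ≠ 0 := by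
    intro h0
    rw [h0, zero_mul] at hB
    have : (-1 : ℂ) ^ a ≠ 0 := pow_ne_zero _ (by norm_num)
    have h1 := n0 a
    have h2 := n0 m'
    have h3 : x ^ (a + m') ≠ 0 := pow_ne_zero _ hx
    have h4 : q ^ ((a + m').choose 2) ≠ 0 := pow_ne_zero _ hq
    exact absurd hB.symm (by positivity)
  have s1 : x * q ^ a * x * q ^ (a + m') = x * x * q ^ (a + (a + m')) := by ring
  have s2 : q * (x * q ^ a * x) = q * (x * x * q ^ a) := by ring
  rw [s1, s2]
  have sg : ((-1 : ℂ)) ^ a * (-1) ^ a = 1 := by rw [← mul_pow]; simp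
  have k1 := n0 a
  have k2 := n0 m'
  have k3 := n2 a
  have k4 := n2 (a + m' - 1)
  generalize Pn q q a = A1 at *
  generalize Pn q q m' = A2 at *
  generalize Pn q (x * x * q ^ (a + (a + m'))) m' = A3 at *
  generalize Pn q (q * (x * x)) a = A4 at *
  generalize Pn q (x * x * q ^ (a + m')) (a + m') = A5 at *
  generalize Pn q (q * (x * x)) (a + m' - 1) = A6 at *
  generalize Pn q (q * (x * x * q ^ a)) (a + m' - 1) = A7 at *
  generalize ∏ k ∈ (range (a + m' + 1)).erase a, (x * q ^ a - x * q ^ k) = A8 at *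
  rw [← mul_inv, ← mul_inv, ← mul_inv, div_mul_div_comm, inv_mul_eq_div, div_eq_div_iff (by positivity) (by positivity)]
  rw [pow_add (-1 : ℂ)]
  linear_combination (-1) ^ m' * A5 * A6 * hB - (-1) ^ a * (-1) ^ m' * x ^ (a + m') * q ^ ((a + m').choose 2) * A1 * A2 * hA

lemma pair_id (q x t : ℂ) (hq : q ≠ 0) (hx : x ≠ 0) (ht : t ≠ 0)
    (hne : ∀ a b : ℕ, x * q ^ a ≠ t * q ^ b)
    (hp : ∀ m : ℕ, x * t * q ^ m ≠ 1) (a b m' n' : ℕ) :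
    (((Pn q (q * (x * q ^ a / (t * q ^ b))) m')⁻¹ * (Pn q (x * q ^ a * t * q ^ (b + n')) m')⁻¹ *
      ((Pn q (q * (x / t)) a)⁻¹ * (Pn q (q * (x * t)) a)⁻¹)) *
     ((Pn q (q * (t * q ^ b / (x * q ^ a))) n')⁻¹ * (Pn q (t * q ^ b * x * q ^ (a + m')) n')⁻¹ *
      ((Pn q (q * (t / x)) b)⁻¹ * (Pn q (q * (t * x)) b)⁻¹))) *
      ((1 - x * q ^ a * (t * q ^ b)) / (1 - x * t * q ^ ((a + m') + (b + n')))) * q ^ (m' * n') =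
    ((t - x) * t ^ (a + m') * x ^ (b + n') * q ^ ((a + m') * (b + n')) /
      ((1 - x * t * q ^ ((a + m') + (b + n'))) * Pn q (x * t * q ^ (b + n')) (a + m') *
        Pn q (x * t * q ^ (a + m')) (b + n') * (Pn q (x * t) (b + n') / (1 - x * t)) *
        (Pn q (x * t) (a + m') / (1 - x * t)))) *
      (ge q t (b + n') (x * q ^ a) * ge q x (a + m') (t * q ^ b) *
        (ww (t * q ^ b) - ww (x * q ^ a))) := by
  have hz : x * q ^ a ≠ 0 := mul_ne_zero hx (pow_ne_zero _ hq)
  have hv : t * q ^ b ≠ 0 := mul_ne_zero ht (pow_ne_zero _ hq)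
  have hA1 := claimA q (x * t) hp a m' (b + n')
  have hA2 := claimA q (x * t) hp b n' (a + m')
  have hB := claimB q x t hq hx ht hne a b m' n'
  have hw : ww (t * q ^ b) - ww (x * q ^ a) = (x * q ^ a - t * q ^ b) * (1 - x * q ^ a * (t * q ^ b)) /
      (x * q ^ a * (t * q ^ b)) := by
    simp only [ww]; field_simp; ring
  rw [hw, ge, ge]
  have nP : ∀ c k, Pn q (x * t * q ^ c) k ≠ 0 := fun c k => Pn_ne (fun j => by
    rw [mul_assoc, ← pow_add]; exact hp _)
  have nP0 : ∀ k, Pn q (x * t) k ≠ 0 := fun k => by simpa using nP 0 k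
  have nP1 : ∀ k, Pn q (q * (x * t)) k ≠ 0 := fun k => by
    have := nP 1 k
    rwa [pow_one, mul_comm] at this
  have n1 : ∀ c, 1 - x * t * q ^ c ≠ 0 := fun c => sub_ne_zero.mpr (hp c).symm
  have n10 : 1 - x * t ≠ 0 := by simpa using n1 0
  have m1 : ∏ k ∈ range (b + n' + 1), (x * q ^ a - t * q ^ k) ≠ 0 :=
    Finset.prod_ne_zero_iff.2 fun k _ => sub_ne_zero.mpr (hne a k)
  have m2 : ∏ k ∈ range (a + m' + 1), (t * q ^ b - x * q ^ k) ≠ 0 :=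
    Finset.prod_ne_zero_iff.2 fun k _ => sub_ne_zero.mpr (hne k b).symm
  have hBne : _ ≠ (0:ℂ) := mul_ne_zero (mul_ne_zero m1 m2) (pow_ne_zero (m' * n') hq)
  rw [hB] at hBne
  simp only [mul_ne_zero_iff] at hBne
  obtain ⟨⟨⟨⟨⟨k1, k2⟩, k3⟩, k4⟩, k5⟩, k6⟩ := hBne
  rw [show x * q ^ a * t * q ^ (b + n') = x * t * q ^ (a + (b + n')) by ring,
    show t * q ^ b * x * q ^ (a + m') = x * t * q ^ (b + (a + m')) by ring,
    show x * q ^ a * t = x * t * q ^ a by ring, show t * q ^ b * x = x * t * q ^ b by ring, mul_comm t x]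
  have l1 := nP (a + (b + n')) m'
  have l2 := nP (b + (a + m')) n'
  have l3 := nP (b + n') (a + m')
  have l4 := nP (a + m') (b + n')
  have l5 := nP0 (b + n')
  have l6 := nP0 (a + m')
  have l7 := nP1 a
  have l8 := nP1 b
  have l9 := n1 (a + m' + (b + n'))
  have l10 := n1 a
  have l11 := n1 b
  have l12 := div_ne_zero l5 n10
  have l13 := div_ne_zero l6 n10
  have l14 := div_ne_zero (nP a (b + n')) l10
  have l15 := div_ne_zero (nP b (a + m')) l11
  have l16 : q ^ (m' * n') ≠ 0 := pow_ne_zero _ hq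
  generalize Pn q (x * t) (b + n') / (1 - x * t) = H1 at *
  generalize Pn q (x * t) (a + m') / (1 - x * t) = H2 at *
  generalize Pn q (x * t * q ^ a) (b + n') / (1 - x * t * q ^ a) = H3 at *
  generalize Pn q (x * t * q ^ b) (a + m') / (1 - x * t * q ^ b) = H4 at *
  generalize (1 - x * t * q ^ (a + m' + (b + n'))) = H5 at *
  generalize Pn q (q * (x * q ^ a / (t * q ^ b))) m' = A1 at *
  generalize Pn q (q * (t * q ^ b / (x * q ^ a))) n' = A2 at *
  generalize Pn q (q * (x / t)) a = A3 at *
  generalize Pn q (q * (t / x)) b = A4 at *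
  generalize Pn q (x * t * q ^ (a + (b + n'))) m' = A5 at *
  generalize Pn q (x * t * q ^ (b + (a + m'))) n' = A6 at *
  generalize Pn q (q * (x * t)) a = A7 at *
  generalize Pn q (q * (x * t)) b = A8 at *
  generalize Pn q (x * t * q ^ (b + n')) (a + m') = A9 at *
  generalize Pn q (x * t * q ^ (a + m')) (b + n') = A10 at *
  generalize ∏ k ∈ range (b + n' + 1), (x * q ^ a - t * q ^ k) = B1 at *
  generalize ∏ k ∈ range (a + m' + 1), (t * q ^ b - x * q ^ k) = B2 at *
  generalize (t - x) * t ^ (a + m') * x ^ (b + n') * q ^ ((a + m') * (b + n')) = K at *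
  generalize x * q ^ a = z at *
  generalize t * q ^ b = v at *
  generalize q ^ (m' * n') = Q at *
  have hmain : B1 * B2 * Q * (A9 * H1) * (A10 * H2) =
      A1 * A2 * A3 * A4 * (z - v) * K * (A5 * A7 * H3) * (A6 * A8 * H4) := by
    rw [hA1, hA2, hB]
  have e1 : ∀ L R : ℂ, L * (A1 * A2 * A3 * A4 * A5 * A6 * A7 * A8 * B1 * B2 * H5 * A9 * A10 * H1 * H2) =
      R * (A1 * A2 * A3 * A4 * A5 * A6 * A7 * A8 * B1 * B2 * H5 * A9 * A10 * H1 * H2) → L = R := by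
    intro L R hLR
    exact mul_right_cancel₀ (by simp [*]) hLR
  apply e1
  field_simp
  linear_combination (1 - z * v) * hmain

noncomputable def Tn (ℓ : ℕ) (q : ℂ) (x : Fin ℓ → ℂ) (n y : Fin ℓ → ℕ) : ℂ :=
  (∏ r, ∏ s, ((Pn q (q * (x r * q ^ y r / (x s * q ^ y s))) (n r - y r))⁻¹ *
      (Pn q (x r * q ^ y r * x s * q ^ n s) (n r - y r))⁻¹ *
      ((Pn q (q * (x r / x s)) (y r))⁻¹ * (Pn q (q * (x r * x s)) (y r))⁻¹))) *
  (∏ r, ∏ s, if r < s then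
    (1 - x r * q ^ y r * (x s * q ^ y s)) / (1 - x r * x s * q ^ (n r + n s)) else 1) *
  (-1) ^ (∑ r, (n r - y r)) * q ^ ((∑ r, (n r - y r)).choose 2)

noncomputable def Cn (ℓ : ℕ) (q : ℂ) (x : Fin ℓ → ℂ) (n : Fin ℓ → ℕ) : ℂ :=
  (∏ r, ((-1) ^ n r * x r ^ n r * q ^ ((n r).choose 2) /
      (Pn q (x r * x r * q ^ n r) (n r) * Pn q (q * (x r * x r)) (n r - 1)))) *
  ∏ r, ∏ s, if r < s then
    ((x s - x r) * x s ^ n r * x r ^ n s * q ^ (n r * n s) /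
      ((1 - x r * x s * q ^ (n r + n s)) * Pn q (x r * x s * q ^ n s) (n r) *
        Pn q (x r * x s * q ^ n r) (n s) * (Pn q (x r * x s) (n s) / (1 - x r * x s)) *
        (Pn q (x r * x s) (n r) / (1 - x r * x s)))) else 1

lemma ite_mul_one' {p : Prop} [Decidable p] (a b : ℂ) :
    (if p then a else 1) * (if p then b else 1) = if p then a * b else 1 := by
  split_ifs <;> simp

lemma T_eq (ℓ : ℕ) (q : ℂ) (x : Fin ℓ → ℂ) (h : Gen ℓ q x) (n y : Fin ℓ → ℕ) (hy : y ≤ n) :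
    Tn ℓ q x n y = Cn ℓ q x n * ((∏ r, gg ℓ q x n r (y r)) *
      ∏ r, ∏ s, if r < s then ww (x s * q ^ y s) - ww (x r * q ^ y r) else 1) := by
  have hdiag : ∀ r, ((Pn q (q * (x r * q ^ y r / (x r * q ^ y r))) (n r - y r))⁻¹ *
      (Pn q (x r * q ^ y r * x r * q ^ n r) (n r - y r))⁻¹ *
      ((Pn q (q * (x r / x r)) (y r))⁻¹ * (Pn q (q * (x r * x r)) (y r))⁻¹)) *
      ((-1) ^ (n r - y r) * q ^ ((n r - y r).choose 2)) =
      ((-1) ^ n r * x r ^ n r * q ^ ((n r).choose 2) /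
      (Pn q (x r * x r * q ^ n r) (n r) * Pn q (q * (x r * x r)) (n r - 1))) *
      gd q (x r) (n r) (y r) := by
    intro r
    have := diag_id q (x r) h.hq (h.hx r) h.hq1 (h.hp r r) (y r) (n r - y r)
    rw [Nat.add_sub_cancel' (hy r)] at this
    exact this
  have hpair : ∀ r s, r < s → (((Pn q (q * (x r * q ^ y r / (x s * q ^ y s))) (n r - y r))⁻¹ *
      (Pn q (x r * q ^ y r * x s * q ^ n s) (n r - y r))⁻¹ *
      ((Pn q (q * (x r / x s)) (y r))⁻¹ * (Pn q (q * (x r * x s)) (y r))⁻¹)) *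
      ((Pn q (q * (x s * q ^ y s / (x r * q ^ y r))) (n s - y s))⁻¹ *
      (Pn q (x s * q ^ y s * x r * q ^ n r) (n s - y s))⁻¹ *
      ((Pn q (q * (x s / x r)) (y s))⁻¹ * (Pn q (q * (x s * x r)) (y s))⁻¹))) *
      ((1 - x r * q ^ y r * (x s * q ^ y s)) / (1 - x r * x s * q ^ (n r + n s))) *
      q ^ ((n r - y r) * (n s - y s)) =
      ((x s - x r) * x s ^ n r * x r ^ n s * q ^ (n r * n s) /
      ((1 - x r * x s * q ^ (n r + n s)) * Pn q (x r * x s * q ^ n s) (n r) *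
        Pn q (x r * x s * q ^ n r) (n s) * (Pn q (x r * x s) (n s) / (1 - x r * x s)) *
        (Pn q (x r * x s) (n r) / (1 - x r * x s)))) *
      (ge q (x s) (n s) (x r * q ^ y r) * ge q (x r) (n r) (x s * q ^ y s) *
        (ww (x s * q ^ y s) - ww (x r * q ^ y r))) := by
    intro r s hrs
    have := pair_id q (x r) (x s) h.hq (h.hx r) (h.hx s) (h.hd r s hrs.ne) (h.hp0 r s hrs.ne)
      (y r) (y s) (n r - y r) (n s - y s)
    rw [Nat.add_sub_cancel' (hy r), Nat.add_sub_cancel' (hy s)] at this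
    exact this
  simp only [Tn, Cn, gg]
  rw [prod_pairs, pow_choose_pairs, ← Finset.prod_pow_eq_pow_sum, Finset.prod_mul_distrib (f := fun r => gd q (x r) (n r) (y r)),
    prod_offdiag (fun r s => ge q (x s) (n s) (x r * q ^ y r))]
  have L1 := Finset.prod_congr (rfl : (univ : Finset (Fin ℓ)) = univ) (fun r _ => hdiag r)
  have L2 : (∏ r, ∏ s, if r < s then _ else 1) = (∏ r, ∏ s, if r < s then _ else (1 : ℂ)) :=
    Finset.prod_congr (rfl : (univ : Finset (Fin ℓ)) = univ) (fun r _ =>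
      Finset.prod_congr (rfl : (univ : Finset (Fin ℓ)) = univ) (fun s _ =>
        if_ctx_congr Iff.rfl (hpair r s) (fun _ => rfl)))
  simp only [← ite_mul_one', Finset.prod_mul_distrib] at L1 L2 ⊢
  have L3 := congrArg₂ (fun a b : ℂ => a * b) L1 L2
  linear_combination L3

lemma T_sum (ℓ : ℕ) (q : ℂ) (x : Fin ℓ → ℂ) (h : Gen ℓ q x) (n : Fin ℓ → ℕ) (hn : n ≠ 0) :
    ∑ y ∈ Finset.Icc 0 n, Tn ℓ q x n y = 0 := by
  rw [Finset.sum_congr rfl (fun y hy => T_eq ℓ q x h n y (Finset.mem_Icc.1 hy).2), ← Finset.mul_sum,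
    sum_det ℓ n (gg ℓ q x n) (fun r y => ww (x r * q ^ y)), det_zero ℓ q x h n hn, mul_zero]

lemma conv (ℓ : ℕ) (q : ℂ) (hq : q ≠ 0) (x : Fin ℓ → ℂ) (j n y : Fin ℓ → ℕ) (hy : y ≤ n) :
    MCstar ℓ q x (j + n) (j + y) * MC ℓ q x (j + y) j =
      Tn ℓ q (fun r => x r * q ^ j r) n y := by
  have c1 : ∀ r, (((j + n) r : ℕ) : ℤ) - ((j + y) r : ℕ) = ((n r - y r : ℕ) : ℤ) := by
    intro r
    have : y r ≤ n r := hy r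
    simp only [Pi.add_apply]
    omega
  have c2 : ∀ r, (((j + y) r : ℕ) : ℤ) - (j r : ℕ) = ((y r : ℕ) : ℤ) := by
    intro r
    simp only [Pi.add_apply]
    omega
  have c3 : (∑ s, (((j + n) s : ℕ) : ℤ)) - ∑ s, (((j + y) s : ℕ) : ℤ) = ((∑ r, (n r - y r) : ℕ) : ℤ) := by
    rw [← Finset.sum_sub_distrib, Nat.cast_sum]
    exact Finset.sum_congr rfl fun r _ => c1 r
  have c4 : ∀ D : ℕ, (D : ℤ) * ((D : ℤ) - 1) / 2 = ((D.choose 2 : ℕ) : ℤ) := by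
    intro D
    rw [Nat.choose_two_right]
    cases D with
    | zero => simp
    | succ D => push_cast; simp
  have zd : ∀ a b : ℕ, q ^ ((a : ℤ) - (b : ℤ)) = q ^ a / q ^ b := by
    intro a b
    rw [zpow_sub₀ hq, zpow_natCast, zpow_natCast]
  have za : ∀ a b : ℕ, q ^ ((a : ℤ) + (b : ℤ)) = q ^ (a + b) := by
    intro a b
    rw [← zpow_natCast]; push_cast; rfl
  unfold MCstar MC Tn
  simp only [c1, c2, c3, c4, qp_nat, zd, za, zpow_natCast]
  have re : ∀ A B C D E : ℂ, A * B * C * D * E = (A * E) * B * C * D := by intros; ring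
  rw [re]
  congr 1
  congr 1
  congr 1
  · rw [← Finset.prod_mul_distrib]
    refine Finset.prod_congr rfl fun r _ => ?_
    rw [← Finset.prod_mul_distrib]
    refine Finset.prod_congr rfl fun s _ => ?_
    have g1 : q * (x r / x s) * (q ^ (j + y) r / q ^ (j + y) s) =
        q * (x r * q ^ j r * q ^ y r / (x s * q ^ j s * q ^ y s)) := by
      simp only [Pi.add_apply, pow_add, div_eq_mul_inv, mul_inv]; ring
    have g2 : x r * x s * q ^ ((j + y) r + (j + n) s) =
        x r * q ^ j r * q ^ y r * (x s * q ^ j s) * q ^ n s := by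
      simp only [Pi.add_apply, pow_add]; ring
    have g3 : q * (x r / x s) * (q ^ j r / q ^ j s) =
        q * (x r * q ^ j r / (x s * q ^ j s)) := by
      simp only [div_eq_mul_inv, mul_inv]; ring
    have g4 : q * (x r * x s) * q ^ (j r + j s) =
        q * (x r * q ^ j r * (x s * q ^ j s)) := by
      simp only [pow_add]; ring
    rw [g1, g2, g3, g4]
  · refine Finset.prod_congr rfl fun r _ => Finset.prod_congr rfl fun s _ => ?_
    have g1 : x r * x s * q ^ ((j + y) r + (j + y) s) =
        x r * q ^ j r * q ^ y r * (x s * q ^ j s * q ^ y s) := by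
      simp only [Pi.add_apply, pow_add]; ring
    have g2 : x r * x s * q ^ ((j + n) r + (j + n) s) =
        x r * q ^ j r * (x s * q ^ j s) * q ^ (n r + n s) := by
      simp only [Pi.add_apply, pow_add]; ring
    rw [g1, g2]

lemma Gen.shift {ℓ : ℕ} {q : ℂ} {x : Fin ℓ → ℂ} (h : Gen ℓ q x) (j : Fin ℓ → ℕ) :
    Gen ℓ q (fun r => x r * q ^ j r) where
  hq := h.hq
  hx r := mul_ne_zero (h.hx r) (pow_ne_zero _ h.hq)
  hq1 := h.hq1
  hd r s hrs a b := by
    have := h.hd r s hrs (j r + a) (j s + b)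
    simpa only [pow_add, mul_assoc] using this
  hp r s m := by
    have := h.hp r s (j r + j s + m)
    intro e
    apply this
    rw [← e]; ring
  hp0 r s hrs m := by
    have := h.hp0 r s hrs (j r + j s + m)
    intro e
    apply this
    rw [← e]; ring

lemma orth (ℓ : ℕ) (q : ℂ) (x : Fin ℓ → ℂ) (h : Gen ℓ q x) (i j : Fin ℓ → ℕ) (hji : j ≤ i)
    (hne : j ≠ i) :
    ∑ y ∈ Finset.Icc j i, MCstar ℓ q x i y * MC ℓ q x y j = 0 := by
  obtain ⟨n, rfl⟩ : ∃ n, i = j + n := ⟨i - j, (add_tsub_cancel_of_le hji).symm⟩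
  have hn : n ≠ 0 := by
    rintro rfl
    simp at hne
  rw [← T_sum ℓ q _ (h.shift j) n hn]
  symm
  refine Finset.sum_bij (fun y _ => j + y) ?_ ?_ ?_ ?_
  · intro y hy
    have := (Finset.mem_Icc.1 hy).2
    simp [this]
  · intro a _ b _ e
    simpa using e
  · intro b hb
    obtain ⟨h1, h2⟩ := Finset.mem_Icc.1 hb
    refine ⟨b - j, ?_, add_tsub_cancel_of_le h1⟩
    simp only [Finset.mem_Icc, zero_le, true_and]
    rwa [tsub_le_iff_left]
  · intro y hy
    exact (conv ℓ q h.hq x j n y (Finset.mem_Icc.1 hy).2).symm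

lemma MCstar_self (ℓ : ℕ) (q : ℂ) (x : Fin ℓ → ℂ) (h : Gen ℓ q x) (i : Fin ℓ → ℕ) :
    MCstar ℓ q x i i = 1 := by
  unfold MCstar
  have : (∏ r, ∏ s, if r < s then
      (1 - x r * x s * q ^ ((i r : ℤ) + (i s : ℤ))) /
        (1 - x r * x s * q ^ ((i r : ℤ) + (i s : ℤ))) else 1) = 1 := by
    refine Finset.prod_eq_one fun r _ => Finset.prod_eq_one fun s _ => ?_
    split_ifs with hrs
    · apply div_self
      have := h.hp0 r s hrs.ne (i r + i s)
      rw [sub_ne_zero]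
      intro e
      apply this
      rw [e, ← zpow_natCast]; push_cast; rfl
    · rfl
  rw [this]
  simp [qp]

lemma MC_self (ℓ : ℕ) (q : ℂ) (x : Fin ℓ → ℂ) (i : Fin ℓ → ℕ) :
    MC ℓ q x i i = 1 := by
  simp [MC, qp]

lemma star_MC (ℓ : ℕ) (q : ℂ) (x : Fin ℓ → ℂ) (h : Gen ℓ q x) (A : (Fin ℓ → ℕ) → ℂ) (N : Fin ℓ → ℕ) :
    ∑ y ∈ Finset.Icc 0 N, MCstar ℓ q x N y * ∑ j ∈ Finset.Icc 0 y, MC ℓ q x y j * A j = A N := by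
  simp only [Finset.mul_sum]
  rw [Finset.sum_comm' (t' := Finset.Icc 0 N) (s' := fun j => Finset.Icc j N)]
  · rw [Finset.sum_eq_single N]
    · simp [MCstar_self ℓ q x h, MC_self]
    · intro j hj hne
      have := orth ℓ q x h N j (Finset.mem_Icc.1 hj).2 hne
      simp only [← mul_assoc, ← Finset.sum_mul, this, zero_mul]
    · intro hN
      simp at hN
  · intro y j
    simp only [Finset.mem_Icc, zero_le, true_and]
    constructor
    · rintro ⟨a, b⟩; exact ⟨⟨b, a⟩, b.trans a⟩
    · rintro ⟨⟨a, b⟩, c⟩; exact ⟨b, a⟩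

lemma gen_of (ℓ : ℕ) (q : ℂ)
    (hq : q ≠ 0) (x : Fin ℓ → ℂ) (hx : ∀ k, x k ≠ 0) (hℓ : 1 ≤ ℓ)
    (hd1 : ∀ i j : Fin ℓ → ℕ, (∀ k, j k ≤ i k) → ∀ r s : Fin ℓ,
      qp (q * (x r / x s) * q ^ ((j r : ℤ) - (j s : ℤ))) q ((i r : ℤ) - (j r : ℤ)) ≠ 0)
    (hd2 : ∀ i j : Fin ℓ → ℕ, (∀ k, j k ≤ i k) → ∀ r s : Fin ℓ,
      qp (q * (x r * x s) * q ^ ((j r : ℤ) + (j s : ℤ))) q ((i r : ℤ) - (j r : ℤ)) ≠ 0)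
    (hd4 : ∀ (i : Fin ℓ → ℕ) (r s : Fin ℓ), r < s →
      (1 : ℂ) - x r * x s * q ^ ((i r : ℤ) + (i s : ℤ)) ≠ 0) : Gen ℓ q x := by
  have last : ∀ a : ℂ, ∀ m : ℕ, qp a q ((m + 1 : ℕ) : ℤ) ≠ 0 → a * q ^ m ≠ 1 := by
    intro a m h0 e
    apply h0
    rw [qp_nat, Pn, Finset.prod_range_succ, e]
    simp
  refine ⟨hq, hx, ?_, ?_, ?_, ?_⟩
  · intro m
    have := hd1 (fun _ => m + 1) (fun _ => 0) (fun _ => Nat.zero_le _) ⟨0, hℓ⟩ ⟨0, hℓ⟩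
    rw [div_self (hx _)] at this
    have h2 := last q m (by simpa using this)
    rwa [← pow_succ'] at h2
  · intro r s hrs a b e
    have := hd1 (fun k => if k = s then b + 1 else a + 1) (fun k => if k = s then b + 1 else 0)
      (by intro k; split_ifs <;> simp) r s
    simp only [hrs, if_true, if_false] at this
    have h2 := last (q * (x r / x s) * q ^ (((0 : ℕ) : ℤ) - ((b + 1 : ℕ) : ℤ))) a (by simpa using this)
    apply h2
    have hxs := hx s
    have hqb : q ^ b ≠ 0 := pow_ne_zero _ hq
    rw [show ((0 : ℕ) : ℤ) - ((b + 1 : ℕ) : ℤ) = -((b + 1 : ℕ) : ℤ) by simp, zpow_neg, zpow_natCast, pow_succ]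
    field_simp
    linear_combination e
  · intro r s m
    have := hd2 (fun _ => m + 1) (fun _ => 0) (fun _ => Nat.zero_le _) r s
    have h2 := last (q * (x r * x s)) m (by simpa using this)
    intro e
    apply h2
    rw [← e]; ring
  · have key : ∀ r s, r < s → ∀ m : ℕ, x r * x s * q ^ m ≠ 1 := by
      intro r s hrs m e
      apply hd4 (fun k => if k = r then m else 0) r s hrs
      simp [hrs.ne', e]
    intro r s hrs m
    rcases lt_or_gt_of_ne hrs with h | h
    · exact key r s h m
    · rw [mul_comm (x r)]; exact key s r h m

/-- **C_ℓ Bailey Pair Inversion.**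
`B_N = ∑_{0 ≤ y ≤ N} M(N;y) A_y` for all `N` iff
`A_N = ∑_{0 ≤ y ≤ N} M*(N;y) B_y` for all `N`. -/
theorem Cl_bailey_pair_inversion (ℓ : ℕ) (hℓ : 1 ≤ ℓ) (q : ℂ)
    (hq : q ≠ 0) (x : Fin ℓ → ℂ) (hx : ∀ k, x k ≠ 0)
    (hd1 : ∀ i j : Fin ℓ → ℕ, (∀ k, j k ≤ i k) → ∀ r s : Fin ℓ,
      qp (q * (x r / x s) * q ^ ((j r : ℤ) - (j s : ℤ))) q ((i r : ℤ) - (j r : ℤ)) ≠ 0)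
    (hd2 : ∀ i j : Fin ℓ → ℕ, (∀ k, j k ≤ i k) → ∀ r s : Fin ℓ,
      qp (q * (x r * x s) * q ^ ((j r : ℤ) + (j s : ℤ))) q ((i r : ℤ) - (j r : ℤ)) ≠ 0)
    (hd3 : ∀ i j : Fin ℓ → ℕ, (∀ k, j k ≤ i k) → ∀ r s : Fin ℓ,
      qp ((x r * x s) * q ^ ((j r : ℤ) + (i s : ℤ))) q ((i r : ℤ) - (j r : ℤ)) ≠ 0)
    (hd4 : ∀ (i : Fin ℓ → ℕ) (r s : Fin ℓ), r < s →
      (1 : ℂ) - x r * x s * q ^ ((i r : ℤ) + (i s : ℤ)) ≠ 0)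
    (A B : (Fin ℓ → ℕ) → ℂ) :
    (∀ N : Fin ℓ → ℕ, B N = ∑ y ∈ Finset.Icc 0 N, MC ℓ q x N y * A y) ↔
      (∀ N : Fin ℓ → ℕ, A N = ∑ y ∈ Finset.Icc 0 N, MCstar ℓ q x N y * B y) := by
  have h := gen_of ℓ q hq x hx hℓ hd1 hd2 hd4
  constructor
  · intro hB N
    rw [Finset.sum_congr rfl (fun y _ => by rw [hB y]), star_MC ℓ q x h A N]
  · intro hA N
    induction N using WellFoundedLT.induction with
    | ind N ih =>
      have h1 := hA N
      rw [← star_MC ℓ q x h A N] at h1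
      have hmem : N ∈ Finset.Icc 0 N := by simp
      rw [← Finset.add_sum_erase _ (fun y => MCstar ℓ q x N y *
          ∑ j ∈ Finset.Icc 0 y, MC ℓ q x y j * A j) hmem,
        ← Finset.add_sum_erase _ (fun y => MCstar ℓ q x N y * B y) hmem] at h1
      simp only [MCstar_self ℓ q x h, one_mul] at h1
      have h2 : ∀ y ∈ (Finset.Icc 0 N).erase N, MCstar ℓ q x N y * B y =
          MCstar ℓ q x N y * ∑ j ∈ Finset.Icc 0 y, MC ℓ q x y j * A j := by
        intro y hy
        rw [← ih y (lt_of_le_of_ne (Finset.mem_Icc.1 (Finset.mem_of_mem_erase hy)).2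
          (Finset.ne_of_mem_erase hy))]
      rw [Finset.sum_congr rfl h2] at h1
      exact (add_right_cancel h1).symm
end

section
/- (The A_ℓ generalization of Bailey's Lemma.) Let ℓ ≥ 1, let q, a, ρ, σ, x_1, …, x_ℓ be nonzero complex numbers such that every q-shifted factorial occurring in a denominator below is nonzero. Let M(i;j) := ∏_{r,s=1}^{ℓ} ((q x_r/x_s) q^{j_r−j_s}; q)_{i_r−j_r}^{−1} · ∏_{k=1}^{ℓ} (a q x_k/x_ℓ; q)_{i_k+(j_1+⋯+j_ℓ)}^{−1}, and say that sequences A = {A_y}, B = {B_y} of complex numbers indexed by vectors y of nonnegative integers of length ℓ form an A_ℓ-Bailey pair if B_N = ∑_{0 ≤ y_k ≤ N_k, k=1,…,ℓ} M(N;y) A_y for every vector N of nonnegative integers of length ℓ. Given an A_ℓ-Bailey pair (A,B), define A'_N := ∏_{k=1}^{ℓ} ((aq/ρ)(x_k/x_ℓ); q)_{N_k}^{−1} · ∏_{k=1}^{ℓ} (σ x_k/x_ℓ; q)_{N_k} · [(ρ;q)_{|N|} / (aq/σ; q)_{|N|}] · (aq/(ρσ))^{|N|} · A_N, and B'_N :=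 ∑_{0 ≤ y_k ≤ N_k, k=1,…,ℓ} { ∏_{k=1}^{ℓ} [ (σ x_k/x_ℓ; q)_{y_k} · ((aq/ρ)(x_k/x_ℓ); q)_{N_k}^{−1} ] · ∏_{r,s=1}^{ℓ} ((q x_r/x_s) q^{y_r−y_s}; q)_{N_r−y_r}^{−1} · [ (aq/(ρσ); q)_{|N|−|y|} · (ρ;q)_{|y|} / (aq/σ; q)_{|N|} ] · (aq/(ρσ))^{|y|} · B_y }, where |N| = N_1+⋯+N_ℓ. Then (A',B') is also an A_ℓ-Bailey pair, i.e., B'_N = ∑_{0 ≤ y_k ≤ N_k, k=1,…,ℓ} M(N;y) A'_y for every vector N of nonnegative integers of length ℓ. -/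
set_option autoImplicit false
set_option maxHeartbeats 1000000

open Finset

noncomputable def pn (q a : ℂ) (n : ℕ) : ℂ := ∏ k ∈ Finset.range n, (1 - a * q ^ k)

lemma pn_zero (q a : ℂ) : pn q a 0 = 1 := by simp [pn]

lemma pn_succ (q a : ℂ) (n : ℕ) : pn q a (n+1) = pn q a n * (1 - a * q ^ n) := by
  simp [pn, Finset.prod_range_succ]

lemma pn_succ' (q a : ℂ) (n : ℕ) : pn q a (n+1) = (1 - a) * pn q (a * q) n := by
  simp only [pn, Finset.prod_range_succ', pow_zero, mul_one]
  rw [mul_comm]; congr 1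
  apply Finset.prod_congr rfl; intros; ring

lemma pn_add (q a : ℂ) (m n : ℕ) : pn q a (m+n) = pn q a m * pn q (a * q^m) n := by
  simp only [pn, Finset.prod_range_add]
  congr 1
  apply Finset.prod_congr rfl; intros; ring

lemma qp_eq (q a : ℂ) (n : ℕ) : qp a q (n : ℤ) = pn q a n := by
  simp [qp, pn]

/-- Lagrange interpolation identity. -/
lemma lag {ι : Type*} [Fintype ι] [DecidableEq ι] (Y V : ι → ℂ) (hY : ∀ i, Y i ≠ 0)
    (hinj : Function.Injective Y) (α β δ : ℂ)
    (h2 : β * ∏ r, Y r + δ * ∏ r, V r = 0) (v : ℂ) :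
    (α + β * v) * ∏ r, (1 - v * Y r) + (-α + δ * v) * ∏ r, (1 - v * V r) =
    ∑ i, v * (-α * Y i + δ) * (∏ r, (1 - V r / Y i)) *
      ∏ r ∈ univ.erase i, ((1 - v * Y r) / (1 - Y r / Y i)) := by
  classical
  by_cases hv : v = 0
  · subst hv; simp
  obtain hι | hι := isEmpty_or_nonempty ι
  · simp at h2 ⊢
    linear_combination v * h2
  set w := v⁻¹ with hw
  have hw0 : w ≠ 0 := inv_ne_zero hv
  have hvw : v = w⁻¹ := by simp [hw]
  open Polynomial in
  let p : Polynomial ℂ := C α * X * ((∏ r, (X - C (Y r))) - ∏ r, (X - C (V r)))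
      + C β * (∏ r, (X - C (Y r))) + C δ * (∏ r, (X - C (V r)))
      - ∑ i, C ((-α * Y i + δ) / Y i * ∏ r, (Y i - V r)) * X *
        ∏ r ∈ univ.erase i, (C ((Y i - Y r)⁻¹) * (X - C (Y r)))
  have hdY : ∀ Z : ι → ℂ, (∏ r, (Polynomial.X - Polynomial.C (Z r))).degree = (Fintype.card ι : WithBot ℕ) := by
    intro Z
    rw [Polynomial.degree_prod]; simp
  have hdiff : ((∏ r, (Polynomial.X - Polynomial.C (Y r))) - ∏ r, (Polynomial.X - Polynomial.C (V r))).degree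
      < (Fintype.card ι : WithBot ℕ) := by
    rw [← hdY Y]
    apply Polynomial.degree_sub_lt_left
    · rw [hdY, hdY]
    · exact (Polynomial.monic_prod_of_monic _ _ (fun i _ => Polynomial.monic_X_sub_C _)).ne_zero
    · rw [(Polynomial.monic_prod_of_monic _ _ (fun i _ => Polynomial.monic_X_sub_C _)).leadingCoeff,
        (Polynomial.monic_prod_of_monic _ _ (fun i _ => Polynomial.monic_X_sub_C _)).leadingCoeff]
  have hdeg : p.degree < (insert 0 (univ.image Y)).card := by
    have hc : (insert 0 (univ.image Y)).card = Fintype.card ι + 1 := by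
      rw [Finset.card_insert_of_notMem (by simpa using hY), Finset.card_image_of_injective _ hinj,
        Finset.card_univ]
    rw [hc]
    have dC : ∀ (z : ℂ) (f : Polynomial ℂ), f.degree ≤ (Fintype.card ι : WithBot ℕ) →
        (Polynomial.C z * f).degree ≤ (Fintype.card ι : WithBot ℕ) := by
      intro z f hf
      exact Polynomial.degree_le_of_natDegree_le ((Polynomial.natDegree_C_mul_le _ _).trans
        (Polynomial.natDegree_le_of_degree_le hf))
    have hle : p.degree ≤ (Fintype.card ι : WithBot ℕ) := by
      refine (Polynomial.degree_sub_le_of_le (a := (Fintype.card ι : WithBot ℕ)) (b := (Fintype.card ι : WithBot ℕ)) ?_ ?_).trans (max_self _).le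
      · refine (Polynomial.degree_add_le_of_le (a := (Fintype.card ι : WithBot ℕ)) (b := (Fintype.card ι : WithBot ℕ)) ?_ ?_).trans (max_self _).le
        · refine (Polynomial.degree_add_le_of_le (a := (Fintype.card ι : WithBot ℕ)) (b := (Fintype.card ι : WithBot ℕ)) ?_ ?_).trans (max_self _).le
          · have : (Polynomial.C α * Polynomial.X).natDegree ≤ 1 := (Polynomial.natDegree_C_mul_le _ _).trans Polynomial.natDegree_X_le
            have hcp := Fintype.card_pos (α := ι)
            have h3 : ((∏ r, (Polynomial.X - Polynomial.C (Y r))) - ∏ r, (Polynomial.X - Polynomial.C (V r))).natDegree < Fintype.card ι := by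
              by_cases h0 : ((∏ r, (Polynomial.X - Polynomial.C (Y r))) - ∏ r, (Polynomial.X - Polynomial.C (V r))) = 0
              · rw [h0]; simpa using hcp
              · exact (Polynomial.natDegree_lt_iff_degree_lt h0).2 hdiff
            apply Polynomial.degree_le_of_natDegree_le
            refine Polynomial.natDegree_mul_le.trans ?_
            omega
          · exact dC _ _ (hdY Y).le
        · exact dC _ _ (hdY V).le
      · refine (Polynomial.degree_sum_le _ _).trans ?_
        apply Finset.sup_le
        intro i _
        apply Polynomial.degree_le_of_natDegree_le
        refine Polynomial.natDegree_mul_le.trans ?_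
        have h1 : ∀ z : ℂ, (Polynomial.C z * Polynomial.X).natDegree ≤ 1 := fun z => (Polynomial.natDegree_C_mul_le _ _).trans Polynomial.natDegree_X_le
        have h3 : (∏ r ∈ univ.erase i, (Polynomial.C ((Y i - Y r)⁻¹) * (Polynomial.X - Polynomial.C (Y r)))).natDegree
            ≤ Fintype.card ι - 1 := by
          refine (Polynomial.natDegree_prod_le _ _).trans ?_
          refine (Finset.sum_le_card_nsmul _ _ 1 ?_).trans ?_
          · intro r _
            refine (Polynomial.natDegree_C_mul_le _ _).trans ?_
            simp
          · simp [Finset.card_erase_of_mem]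
        have := h1 ((-α * Y i + δ) / Y i * ∏ r, (Y i - V r))
        have := Fintype.card_pos (α := ι)
        omega
    refine lt_of_le_of_lt hle ?_
    exact_mod_cast Nat.lt_succ_self _
  have hp : p = 0 := by
    apply Polynomial.eq_zero_of_degree_lt_of_eval_finset_eq_zero _ hdeg
    intro y hy
    rw [Finset.mem_insert] at hy
    rcases hy with rfl | hy
    · simp [p, Polynomial.eval_finsetSum, Polynomial.eval_prod, Finset.prod_neg]
      linear_combination (-1)^(Fintype.card ι) * h2
    · obtain ⟨i, -, rfl⟩ := Finset.mem_image.1 hy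
      simp only [p, Polynomial.eval_sub, Polynomial.eval_add, Polynomial.eval_mul, Polynomial.eval_C,
        Polynomial.eval_X, Polynomial.eval_finsetSum, Polynomial.eval_prod]
      rw [Finset.sum_eq_single i]
      · have h0 : ∏ r, (Y i - Y r) = 0 := Finset.prod_eq_zero (Finset.mem_univ i) (sub_self _)
        have h1 : ∏ r ∈ univ.erase i, ((Y i - Y r)⁻¹ * (Y i - Y r)) = 1 := by
          apply Finset.prod_eq_one
          intro r hr
          apply inv_mul_cancel₀
          rw [sub_ne_zero]
          exact fun h => (Finset.ne_of_mem_erase hr) (hinj h.symm)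
        rw [h0, h1]
        have := hY i
        field_simp
        ring
      · intro j _ hj
        have : ∏ r ∈ univ.erase j, ((Y j - Y r)⁻¹ * (Y i - Y r)) = 0 :=
          Finset.prod_eq_zero (i := i) (by simp [hj.symm]) (by simp)
        rw [this]; simp
      · simp
  have he := congrArg (Polynomial.eval w) hp
  simp only [p, Polynomial.eval_sub, Polynomial.eval_add, Polynomial.eval_mul, Polynomial.eval_C,
        Polynomial.eval_X, Polynomial.eval_finsetSum, Polynomial.eval_prod, Polynomial.eval_zero] at he
  have e1 : ∀ Z : ι → ℂ, ∏ r, (w - Z r) = w ^ (Fintype.card ι) * ∏ r, (1 - v * Z r) := by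
    intro Z
    rw [← Finset.card_univ, ← Finset.prod_const, ← Finset.prod_mul_distrib]
    apply Finset.prod_congr rfl
    intro r _
    rw [hvw]; field_simp
  have e2 : ∀ i, (-α * Y i + δ) / Y i * (∏ r, (Y i - V r)) * w *
      ∏ r ∈ univ.erase i, ((Y i - Y r)⁻¹ * (w - Y r)) =
      w ^ (Fintype.card ι + 1) * (v * (-α * Y i + δ) * (∏ r, (1 - V r / Y i)) *
      ∏ r ∈ univ.erase i, ((1 - v * Y r) / (1 - Y r / Y i))) := by
    intro i
    have a1 : (∏ r, (Y i - V r)) = Y i ^ (Fintype.card ι) * ((∏ r, (1 - V r / Y i)) : ℂ) := by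
      rw [← Finset.card_univ, ← Finset.prod_const, ← Finset.prod_mul_distrib]
      apply Finset.prod_congr rfl
      intro r _
      have := hY i
      field_simp
    have a2 : ∏ r ∈ univ.erase i, ((Y i - Y r)⁻¹ * (w - Y r)) =
        (w / Y i) ^ (Fintype.card ι - 1) * ∏ r ∈ univ.erase i, ((1 - v * Y r) / (1 - Y r / Y i)) := by
      rw [← Finset.card_univ, ← Finset.card_erase_of_mem (Finset.mem_univ i), ← Finset.prod_const,
        ← Finset.prod_mul_distrib]
      apply Finset.prod_congr rfl
      intro r hr
      have := hY i
      have h4 : Y i - Y r ≠ 0 := by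
        rw [sub_ne_zero]
        exact fun h => (Finset.ne_of_mem_erase hr) (hinj h.symm)
      have h5 : 1 - Y r / Y i ≠ 0 := by
        intro h; apply h4; field_simp at h; simpa using h
      rw [hvw]; field_simp
    rw [a1, a2]
    obtain ⟨m, hm⟩ : ∃ m, Fintype.card ι = m + 1 := ⟨Fintype.card ι - 1, by have := Fintype.card_pos (α := ι); omega⟩
    rw [hm, hvw]
    have := hY i
    simp only [Nat.add_sub_cancel]
    generalize (∏ r, (1 - V r / Y i)) = A1
    generalize (∏ r ∈ univ.erase i, ((1 - w⁻¹ * Y r) / (1 - Y r / Y i))) = A2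
    rw [div_pow]
    field_simp
    ring
  rw [e1, e1, Finset.sum_congr rfl (fun i _ => e2 i), ← Finset.mul_sum] at he
  have hwp : w ^ (Fintype.card ι + 1) ≠ 0 := pow_ne_zero _ hw0
  apply mul_left_cancel₀ hwp
  have hwv : w * v = 1 := inv_mul_cancel₀ hv
  linear_combination he + (w ^ (Fintype.card ι)) * (β * (∏ r, (1 - v * Y r)) + δ * ∏ r, (1 - v * V r)) * hwv

structure Gen_s6 {ι : Type*} (q : ℂ) (z : ι → ℂ) : Prop where
  q0 : q ≠ 0
  z0 : ∀ i, z i ≠ 0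
  zz : ∀ r s, r ≠ s → ∀ a b : ℕ, z r * q ^ a ≠ z s * q ^ b
  qq : ∀ m : ℕ, q ^ (m+1) ≠ 1

noncomputable def PP {ι : Type*} [Fintype ι] (q : ℂ) (z : ι → ℂ) (n k : ι → ℕ) : ℂ :=
  ∏ r, ∏ s, (pn q (q * ((z r * q ^ k r) / (z s * q ^ k s))) (n r - k r))⁻¹

noncomputable def PZ {ι : Type*} [Fintype ι] (q : ℂ) (z : ι → ℂ) (k : ι → ℕ) : ℂ :=
  ∏ r, ∏ s, (pn q (q * (z r / z s)) (k r))⁻¹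

noncomputable def TT {ι : Type*} [Fintype ι] (q c : ℂ) (z : ι → ℂ) (n k : ι → ℕ) : ℂ :=
  PP q z n k * PZ q z k * ∏ i, (pn q (z i) (k i) * pn q (c * z i * q ^ k i) (n i - k i))

noncomputable def cc (q c : ℂ) (j : ℕ) (v : ℂ) : ℂ := ∏ i ∈ Finset.range j, (v - c * q ^ i)

lemma Gen_s6.frac_ne {ι : Type*} {q : ℂ} {z : ι → ℂ} (h : Gen_s6 q z) {r s : ι} (hrs : r ≠ s) (a b : ℕ) :
    1 - (z r * q ^ a) / (z s * q ^ b) ≠ 0 := by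
  intro h0
  apply h.zz r s hrs a b
  have h1 : z s * q ^ b ≠ 0 := mul_ne_zero (h.z0 s) (pow_ne_zero _ h.q0)
  have : (z r * q ^ a) / (z s * q ^ b) = 1 := by linear_combination -h0
  rwa [div_eq_one_iff_eq h1] at this

lemma Gen_s6.frac_ne' {ι : Type*} {q : ℂ} {z : ι → ℂ} (h : Gen_s6 q z) (r s : ι) (a b j : ℕ) (hab : r = s → b ≤ a) :
    1 - q * ((z r * q ^ a) / (z s * q ^ b)) * q ^ j ≠ 0 := by
  have e : q * ((z r * q ^ a) / (z s * q ^ b)) * q ^ j = (z r * q ^ (a + j + 1)) / (z s * q ^ b) := by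
    ring
  rw [e]
  by_cases hrs : r = s
  · subst hrs
    obtain ⟨d, rfl⟩ := Nat.exists_eq_add_of_le (hab rfl)
    have h1 := h.z0 r
    have h2 := pow_ne_zero b h.q0
    have : (z r * q ^ (b + d + j + 1)) / (z r * q ^ b) = q ^ (d + j + 1) := by
      field_simp; ring
    rw [this, sub_ne_zero]
    exact (h.qq _).symm
  · exact h.frac_ne hrs _ _

lemma Gen_s6.pn_ne {ι : Type*} {q : ℂ} {z : ι → ℂ} (h : Gen_s6 q z) (r s : ι) (a b m : ℕ) (hab : r = s → b ≤ a) :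
    pn q (q * ((z r * q ^ a) / (z s * q ^ b))) m ≠ 0 := by
  rw [pn, Finset.prod_ne_zero_iff]
  intro j _
  exact h.frac_ne' r s a b j hab

lemma split2 {ι : Type*} [Fintype ι] [DecidableEq ι] (f : ι → ι → ℂ) (i : ι) :
    ∏ r, ∏ s, f r s = f i i * (∏ s ∈ univ.erase i, f i s) * (∏ r ∈ univ.erase i, f r i) *
      ∏ r ∈ univ.erase i, ∏ s ∈ univ.erase i, f r s := by
  rw [← Finset.mul_prod_erase univ _ (Finset.mem_univ i),
    ← Finset.mul_prod_erase univ (f i) (Finset.mem_univ i), mul_assoc (f i i * _), ← Finset.prod_mul_distrib]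
  congr 1
  apply Finset.prod_congr rfl
  intro r _
  rw [← Finset.mul_prod_erase univ (f r) (Finset.mem_univ i)]

lemma R1 {ι : Type*} [Fintype ι] [DecidableEq ι] {q : ℂ} {z : ι → ℂ} (h : Gen_s6 q z) (n k : ι → ℕ)
    (hk : k ≤ n) (i : ι) (hi : k i < n i) :
    PP q z n (Function.update k i (k i + 1)) *
      ∏ r ∈ univ.erase i, (1 - (z r * q ^ k r) / (z i * q ^ k i)) =
    PP q z n k * (∏ r, (1 - (z r * q ^ n r) / (z i * q ^ k i))) *
      ∏ r ∈ univ.erase i, (1 - q * (z i * q ^ k i) / (z r * q ^ k r)) := by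
  have hz := h.z0
  have hq := h.q0
  set k' := Function.update k i (k i + 1) with hk'
  have ki : k' i = k i + 1 := by simp [hk']
  have kr : ∀ r, r ≠ i → k' r = k r := by intro r hr; simp [hk', hr]
  rw [PP, PP, split2 _ i, split2 _ i, ← Finset.mul_prod_erase univ (fun r => 1 - (z r * q ^ n r) / (z i * q ^ k i)) (Finset.mem_univ i)]
  have e4 : ∏ r ∈ univ.erase i, ∏ s ∈ univ.erase i,
      (pn q (q * ((z r * q ^ k' r) / (z s * q ^ k' s))) (n r - k' r))⁻¹ =
      ∏ r ∈ univ.erase i, ∏ s ∈ univ.erase i,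
      (pn q (q * ((z r * q ^ k r) / (z s * q ^ k s))) (n r - k r))⁻¹ := by
    apply Finset.prod_congr rfl; intro r hr
    apply Finset.prod_congr rfl; intro s hs
    rw [kr r (Finset.ne_of_mem_erase hr), kr s (Finset.ne_of_mem_erase hs)]
  obtain ⟨d, hd⟩ := Nat.exists_eq_add_of_lt hi
  have hd1 : n i - k i = d + 1 := by omega
  have hd2 : n i - (k i + 1) = d := by omega
  have e1 : (pn q (q * ((z i * q ^ k' i) / (z i * q ^ k' i))) (n i - k' i))⁻¹ =
      (pn q (q * ((z i * q ^ k i) / (z i * q ^ k i))) (n i - k i))⁻¹ * (1 - (z i * q ^ n i) / (z i * q ^ k i)) := by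
    have h0 := h.pn_ne i i (k i) (k i) (d+1) (fun _ => le_rfl)
    rw [ki, hd1, hd2]
    have a1 : (z i * q ^ (k i + 1)) / (z i * q ^ (k i + 1)) = 1 :=
      div_self (mul_ne_zero (hz i) (pow_ne_zero _ hq))
    have a2 : (z i * q ^ (k i)) / (z i * q ^ (k i)) = 1 :=
      div_self (mul_ne_zero (hz i) (pow_ne_zero _ hq))
    have a3 : (z i * q ^ n i) / (z i * q ^ k i) = q * q ^ d := by
      have := hz i
      rw [hd]; field_simp; ring
    rw [a2] at h0
    rw [a1, a2, a3]
    rw [mul_one] at *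
    rw [pn_succ] at *
    have := left_ne_zero_of_mul h0
    have := right_ne_zero_of_mul h0
    field_simp
  have e2 : ∏ s ∈ univ.erase i, (pn q (q * ((z i * q ^ k' i) / (z s * q ^ k' s))) (n i - k' i))⁻¹ =
      (∏ s ∈ univ.erase i, (pn q (q * ((z i * q ^ k i) / (z s * q ^ k s))) (n i - k i))⁻¹) *
      ∏ r ∈ univ.erase i, (1 - q * (z i * q ^ k i) / (z r * q ^ k r)) := by
    rw [← Finset.prod_mul_distrib]
    apply Finset.prod_congr rfl; intro s hs
    have h0 := h.pn_ne i s (k i) (k s) (d+1) (fun e => absurd e.symm (Finset.ne_of_mem_erase hs))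
    rw [kr s (Finset.ne_of_mem_erase hs), ki, hd1, hd2]
    rw [pn_succ'] at *
    have a1 : q * (z i * q ^ (k i + 1) / (z s * q ^ k s)) = q * (z i * q ^ k i / (z s * q ^ k s)) * q := by ring
    have a2 : q * (z i * q ^ k i) / (z s * q ^ k s) = q * (z i * q ^ k i / (z s * q ^ k s)) := by ring
    rw [a1, a2]
    have := left_ne_zero_of_mul h0
    have := right_ne_zero_of_mul h0
    rw [mul_inv, mul_right_comm (1 - _)⁻¹, inv_mul_cancel₀ (left_ne_zero_of_mul h0), one_mul]
  have e3 : (∏ r ∈ univ.erase i, (pn q (q * ((z r * q ^ k' r) / (z i * q ^ k' i))) (n r - k' r))⁻¹) *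
      ∏ r ∈ univ.erase i, (1 - (z r * q ^ k r) / (z i * q ^ k i)) =
      (∏ r ∈ univ.erase i, (pn q (q * ((z r * q ^ k r) / (z i * q ^ k i))) (n r - k r))⁻¹) *
      ∏ r ∈ univ.erase i, (1 - (z r * q ^ n r) / (z i * q ^ k i)) := by
    rw [← Finset.prod_mul_distrib, ← Finset.prod_mul_distrib]
    apply Finset.prod_congr rfl; intro r hr
    have hr' := Finset.ne_of_mem_erase hr
    have h0 := h.pn_ne r i (k r) (k i) (n r - k r) (fun e => absurd e hr')
    have h1 := h.pn_ne r i (k r) (k i + 1) (n r - k r) (fun e => absurd e hr')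
    rw [kr r hr', ki]
    have a1 : q * (z r * q ^ k r / (z i * q ^ (k i + 1))) = z r * q ^ k r / (z i * q ^ k i) := by
      have := hz i
      field_simp
      ring
    have a3 : (z r * q ^ n r) / (z i * q ^ k i) = z r * q ^ k r / (z i * q ^ k i) * q ^ (n r - k r) := by
      have : q ^ n r = q ^ k r * q ^ (n r - k r) := by rw [← pow_add]; congr 1; have : k r ≤ n r := hk r; omega
      rw [this]; ring
    rw [a1] at h1
    rw [a1, a3]
    have e := pn_succ q (z r * q ^ k r / (z i * q ^ k i)) (n r - k r)
    rw [pn_succ', mul_comm _ q] at e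
    rw [inv_mul_eq_div, inv_mul_eq_div, div_eq_div_iff h1 h0]
    linear_combination e
  rw [e4, e1, e2]
  linear_combination (pn q (q * ((z i * q ^ k i) / (z i * q ^ k i))) (n i - k i))⁻¹ * (1 - (z i * q ^ n i) / (z i * q ^ k i)) *
    (∏ s ∈ univ.erase i, (pn q (q * ((z i * q ^ k i) / (z s * q ^ k s))) (n i - k i))⁻¹) *
      (∏ r ∈ univ.erase i, (1 - q * (z i * q ^ k i) / (z r * q ^ k r))) * (∏ r ∈ univ.erase i, ∏ s ∈ univ.erase i,
      (pn q (q * ((z r * q ^ k r) / (z s * q ^ k s))) (n r - k r))⁻¹) * e3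

lemma R2 {ι : Type*} [Fintype ι] [DecidableEq ι] {q : ℂ} {z : ι → ℂ} (h : Gen_s6 q z) (k : ι → ℕ) (i : ι) :
    PZ q z (Function.update k i (k i + 1)) * ∏ r, (1 - q * (z i * q ^ k i) / z r) = PZ q z k := by
  rw [PZ, PZ, ← Finset.mul_prod_erase univ _ (Finset.mem_univ i),
    ← Finset.mul_prod_erase univ (fun r => ∏ s, (pn q (q * (z r / z s)) (k r))⁻¹) (Finset.mem_univ i)]
  have e1 : ∏ r ∈ univ.erase i, ∏ s, (pn q (q * (z r / z s)) (Function.update k i (k i + 1) r))⁻¹ =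
      ∏ r ∈ univ.erase i, ∏ s, (pn q (q * (z r / z s)) (k r))⁻¹ := by
    apply Finset.prod_congr rfl; intro r hr
    rw [Function.update_of_ne (Finset.ne_of_mem_erase hr)]
  rw [e1, Function.update_self]
  rw [mul_right_comm, ← Finset.prod_mul_distrib]
  congr 1
  apply Finset.prod_congr rfl; intro s _
  have h0 := h.pn_ne i s 0 0 (k i + 1) (fun _ => le_rfl)
  simp only [pow_zero, mul_one] at h0
  rw [pn_succ] at *
  have a : q * (z i * q ^ k i) / z s = q * (z i / z s) * q ^ k i := by ring
  rw [a, mul_inv, mul_assoc, inv_mul_cancel₀ (right_ne_zero_of_mul h0), mul_one]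

lemma RT {ι : Type*} [Fintype ι] [DecidableEq ι] {q : ℂ} {z : ι → ℂ} (h : Gen_s6 q z) (c : ℂ) (n k : ι → ℕ)
    (hk : k ≤ n) (i : ι) (hi : k i < n i) :
    TT q c z n (Function.update k i (k i + 1)) * (1 - c * (z i * q ^ k i)) *
      (∏ r, (1 - q * (z i * q ^ k i) / z r)) *
      ∏ r ∈ univ.erase i, (1 - (z r * q ^ k r) / (z i * q ^ k i)) =
    TT q c z n k * (1 - z i * q ^ k i) * (∏ r, (1 - (z r * q ^ n r) / (z i * q ^ k i))) *
      ∏ r ∈ univ.erase i, (1 - q * (z i * q ^ k i) / (z r * q ^ k r)) := by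
  have r1 := R1 h n k hk i hi
  have r2 := R2 h k i
  obtain ⟨d, hd⟩ := Nat.exists_eq_add_of_lt hi
  have hd1 : n i - k i = d + 1 := by omega
  have hd2 : n i - (k i + 1) = d := by omega
  have e : (∏ j, (pn q (z j) (Function.update k i (k i + 1) j) *
      pn q (c * z j * q ^ (Function.update k i (k i + 1) j)) (n j - Function.update k i (k i + 1) j))) *
      (1 - c * (z i * q ^ k i)) =
      (∏ j, (pn q (z j) (k j) * pn q (c * z j * q ^ k j) (n j - k j))) * (1 - z i * q ^ k i) := by
    rw [← Finset.mul_prod_erase univ _ (Finset.mem_univ i),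
    ← Finset.mul_prod_erase univ (fun j => (pn q (z j) (k j) * pn q (c * z j * q ^ k j) (n j - k j))) (Finset.mem_univ i)]
    rw [Finset.prod_congr rfl (g := fun j => (pn q (z j) (k j) * pn q (c * z j * q ^ k j) (n j - k j)))]
    · rw [Function.update_self, hd1, hd2, pn_succ, pn_succ' q (c * z i * q ^ k i)]
      have : c * z i * q ^ (k i + 1) = c * z i * q ^ k i * q := by ring
      rw [this]
      ring
    · intro r hr
      rw [Function.update_of_ne (Finset.ne_of_mem_erase hr)]
  rw [TT, TT, ← r2]
  generalize PP q z n (Function.update k i (k i + 1)) = A at *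
  generalize PP q z n k = A' at *
  generalize PZ q z (Function.update k i (k i + 1)) = A'' at *
  generalize (∏ j, (pn q (z j) (Function.update k i (k i + 1) j) *
      pn q (c * z j * q ^ (Function.update k i (k i + 1) j)) (n j - Function.update k i (k i + 1) j))) = B at *
  generalize (∏ j, (pn q (z j) (k j) * pn q (c * z j * q ^ k j) (n j - k j))) = B' at *
  generalize (∏ r, (1 - q * (z i * q ^ k i) / z r)) = C1 at *
  generalize (∏ r ∈ univ.erase i, (1 - (z r * q ^ k r) / (z i * q ^ k i))) = C2 at *
  generalize (∏ r, (1 - (z r * q ^ n r) / (z i * q ^ k i))) = C3 at *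
  generalize (∏ r ∈ univ.erase i, (1 - q * (z i * q ^ k i) / (z r * q ^ k r))) = C4 at *
  linear_combination A'' * C1 * A * C2 * e + A'' * C1 * B' * (1 - z i * q ^ k i) * r1

noncomputable def GG {ι : Type*} [Fintype ι] [DecidableEq ι] (q c : ℂ) (z : ι → ℂ) (n : ι → ℕ) (v : ℂ)
    (i : ι) (k : ι → ℕ) : ℂ :=
  TT q c z n k * (cc q c (∑ r, k r) v * pn q (v * q) (∑ r, n r - ∑ r, k r - 1)) *
    (v * (1 - z i * q ^ k i) * (∏ r, (1 - (z r * q ^ n r) / (z i * q ^ k i))) *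
      ∏ r ∈ univ.erase i, ((1 - v * (z r * q ^ k r)) / (1 - (z r * q ^ k r) / (z i * q ^ k i))))

lemma Gen_s6.inj {ι : Type*} {q : ℂ} {z : ι → ℂ} (h : Gen_s6 q z) (k : ι → ℕ) :
    Function.Injective (fun r => z r * q ^ k r) := by
  intro r s hrs
  by_contra hne
  exact h.zz r s hne _ _ hrs

lemma prodY {ι : Type*} [Fintype ι] (q : ℂ) (z : ι → ℂ) (k : ι → ℕ) :
    ∏ r, (z r * q ^ k r) = (∏ r, z r) * q ^ (∑ r, k r) := by
  rw [Finset.prod_mul_distrib, Finset.prod_pow_eq_pow_sum]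

lemma GG_zero {ι : Type*} [Fintype ι] [DecidableEq ι] {q : ℂ} {z : ι → ℂ} (h : Gen_s6 q z)
    (c : ℂ) (n : ι → ℕ) (v : ℂ) (i : ι) (k : ι → ℕ) (hi : k i = n i) : GG q c z n v i k = 0 := by
  have : ∏ r, (1 - (z r * q ^ n r) / (z i * q ^ k i)) = 0 := by
    apply Finset.prod_eq_zero (Finset.mem_univ i)
    rw [hi, div_self (mul_ne_zero (h.z0 i) (pow_ne_zero _ h.q0)), sub_self]
  rw [GG, this]; ring

lemma claim1 {ι : Type*} [Fintype ι] [DecidableEq ι] {q : ℂ} {z : ι → ℂ} (h : Gen_s6 q z)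
    (c : ℂ) (n : ι → ℕ) (v : ℂ) (k : ι → ℕ) (hk : k ≤ n) :
    TT q c z n k * cc q c (∑ r, k r) v * (pn q (v * q) (∑ r, n r - ∑ r, k r) * ∏ r, (1 - v * (z r * q ^ k r))
      - pn q v (∑ r, n r - ∑ r, k r) * ∏ r, (1 - v * (z r * q ^ n r))) = ∑ i, GG q c z n v i k := by
  by_cases hkn : k = n
  · rw [Finset.sum_eq_zero (fun i _ => GG_zero h c n v i k (by rw [hkn])), hkn]
    simp [pn_zero]
  · have hlt : ∑ r, k r < ∑ r, n r := by
      apply Finset.sum_lt_sum (fun i _ => hk i)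
      by_contra hcon
      push Not at hcon
      exact hkn (le_antisymm hk (fun i => hcon i (Finset.mem_univ i)))
    obtain ⟨d, hd⟩ := Nat.exists_eq_add_of_lt hlt
    have hd1 : ∑ r, n r - ∑ r, k r = d + 1 := by omega
    have L := lag (fun r => z r * q ^ k r) (fun r => z r * q ^ n r)
      (fun i => mul_ne_zero (h.z0 i) (pow_ne_zero _ h.q0)) (h.inj k) 1 (-q ^ (d+1)) 1
      (by rw [prodY, prodY, hd]; ring) v
    simp only [GG]
    rw [← Finset.mul_sum, hd1, pn_succ, pn_succ']
    rw [Nat.add_sub_cancel]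
    have : ∀ i, (v * (1 - z i * q ^ k i) * (∏ r, (1 - (z r * q ^ n r) / (z i * q ^ k i))) *
      ∏ r ∈ univ.erase i, ((1 - v * (z r * q ^ k r)) / (1 - (z r * q ^ k r) / (z i * q ^ k i)))) =
      (v * (-1 * (z i * q ^ k i) + 1) * (∏ r, (1 - (z r * q ^ n r) / (z i * q ^ k i))) *
      ∏ r ∈ univ.erase i, ((1 - v * (z r * q ^ k r)) / (1 - (z r * q ^ k r) / (z i * q ^ k i)))) := by
      intro i; ring
    rw [Finset.sum_congr rfl (fun i _ => this i), ← L]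
    ring

lemma cc_succ (q c : ℂ) (j : ℕ) (v : ℂ) : cc q c (j+1) v = cc q c j v * (v - c * q ^ j) := by
  simp [cc, Finset.prod_range_succ]

lemma cc_shift {q : ℂ} (c : ℂ) (j : ℕ) (v : ℂ) :
    cc q c (j+1) (q * v) = q ^ j * cc q c j v * (q * v - c) := by
  rw [cc, Finset.prod_range_succ', pow_zero, mul_one, cc]
  congr 1
  rw [show q ^ j = ∏ _i ∈ Finset.range j, q by simp, ← Finset.prod_mul_distrib]
  apply Finset.prod_congr rfl; intros; ring

lemma GG_shift {ι : Type*} [Fintype ι] [DecidableEq ι] {q : ℂ} {z : ι → ℂ} (h : Gen_s6 q z)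
    (c : ℂ) (n : ι → ℕ) (v : ℂ) (i : ι) (k k' : ι → ℕ) (hk : k ≤ n) (hi : k i < n i)
    (hk' : k' = Function.update k i (k i + 1)) (j : ℕ) (hj : ∑ r, k r = j) (hj' : ∑ r, k' r = j + 1) :
    GG q c z n v i k = TT q c z n k' * (cc q c j v * pn q (v * q) (∑ r, n r - (j + 1))) *
    (v * (-(-c * q ^ j) * (z i * q ^ k' i) + -q ^ (j+1)) * (∏ r, (1 - z r / (z i * q ^ k' i))) *
      ∏ r ∈ univ.erase i, ((1 - v * (z r * q ^ k' r)) / (1 - (z r * q ^ k' r) / (z i * q ^ k' i)))) := by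
  have hz := h.z0
  have hq := h.q0
  have rt := RT h c n k hk i hi
  rw [← hk'] at rt
  have ki : k' i = k i + 1 := by simp [hk']
  have kr : ∀ r, r ≠ i → k' r = k r := by intro r hr; simp [hk', hr]
  have Yi : z i * q ^ k' i = q * (z i * q ^ k i) := by rw [ki]; ring
  have hYi : z i * q ^ k i ≠ 0 := mul_ne_zero (hz i) (pow_ne_zero _ hq)
  have hqYi : q * (z i * q ^ k i) ≠ 0 := mul_ne_zero hq hYi
  have e1 : ∏ r, (1 - z r / (z i * q ^ k' i)) =
      (∏ r, (-(z r / (q * (z i * q ^ k i))))) * ∏ r, (1 - q * (z i * q ^ k i) / z r) := by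
    rw [← Finset.prod_mul_distrib, Yi]
    apply Finset.prod_congr rfl; intro r _
    have := hz r
    generalize q * (z i * q ^ k i) = y at *
    field_simp
    ring
  have e2 : ∏ r ∈ univ.erase i, ((1 - v * (z r * q ^ k' r)) / (1 - (z r * q ^ k' r) / (z i * q ^ k' i))) =
      (∏ r ∈ univ.erase i, (1 - v * (z r * q ^ k r))) /
      ((∏ r ∈ univ.erase i, (-((z r * q ^ k r) / (q * (z i * q ^ k i))))) *
        ∏ r ∈ univ.erase i, (1 - q * (z i * q ^ k i) / (z r * q ^ k r))) := by
    rw [← Finset.prod_mul_distrib, ← Finset.prod_div_distrib]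
    apply Finset.prod_congr rfl; intro r hr
    rw [kr r (Finset.ne_of_mem_erase hr), Yi]
    congr 1
    have : z r * q ^ k r ≠ 0 := mul_ne_zero (hz r) (pow_ne_zero _ hq)
    generalize q * (z i * q ^ k i) = y at *
    generalize z r * q ^ k r = x at *
    field_simp
    ring
  have e3 : q ^ (j+1) * (∏ r, (-(z r / (q * (z i * q ^ k i))))) =
      - ∏ r ∈ univ.erase i, (-((z r * q ^ k r) / (q * (z i * q ^ k i)))) := by
    have p := prodY q z k'
    rw [hj'] at p
    have a1 : (∏ r, (-(z r / (q * (z i * q ^ k i))))) = (∏ r, z r) * ∏ _r : ι, (-(1 / (q * (z i * q ^ k i)))) := by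
      rw [← Finset.prod_mul_distrib]
      apply Finset.prod_congr rfl; intros; ring
    rw [a1]
    have a2 : ∏ r, (-((z r * q ^ k' r) / (q * (z i * q ^ k i)))) = (∏ r, (z r * q ^ k' r)) * ∏ _r : ι, (-(1 / (q * (z i * q ^ k i)))) := by
      rw [← Finset.prod_mul_distrib]
      apply Finset.prod_congr rfl; intros; ring
    rw [p, ← Finset.mul_prod_erase univ _ (Finset.mem_univ i), Yi, div_self hqYi] at a2
    rw [Finset.prod_congr rfl (g := fun r => (-((z r * q ^ k r) / (q * (z i * q ^ k i)))))] at a2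
    · linear_combination -a2
    · intro r hr
      rw [kr r (Finset.ne_of_mem_erase hr)]
  have hb : ∏ r ∈ univ.erase i, (-((z r * q ^ k r) / (q * (z i * q ^ k i)))) ≠ 0 := by
    rw [Finset.prod_ne_zero_iff]
    intro r _
    exact neg_ne_zero.2 (div_ne_zero (mul_ne_zero (hz r) (pow_ne_zero _ hq)) hqYi)
  have hE2 : ∏ r ∈ univ.erase i, (1 - (z r * q ^ k r) / (z i * q ^ k i)) ≠ 0 := by
    rw [Finset.prod_ne_zero_iff]
    intro r hr
    exact h.frac_ne (Finset.ne_of_mem_erase hr) _ _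
  have hE4 : ∏ r ∈ univ.erase i, (1 - q * (z i * q ^ k i) / (z r * q ^ k r)) ≠ 0 := by
    rw [Finset.prod_ne_zero_iff]
    intro r hr
    rw [← Yi]
    exact h.frac_ne (Finset.ne_of_mem_erase hr).symm _ _
  rw [GG, hj, e1, e2, Yi, Nat.sub_sub, Finset.prod_div_distrib]
  generalize (∏ r ∈ univ.erase i, (-((z r * q ^ k r) / (q * (z i * q ^ k i))))) = b at *
  generalize (∏ r, (-(z r / (q * (z i * q ^ k i))))) = a at *
  generalize (∏ r, (1 - q * (z i * q ^ k i) / z r)) = E1 at *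
  generalize (∏ r ∈ univ.erase i, (1 - (z r * q ^ k r) / (z i * q ^ k i))) = E2 at *
  generalize (∏ r, (1 - (z r * q ^ n r) / (z i * q ^ k i))) = E3 at *
  generalize (∏ r ∈ univ.erase i, (1 - q * (z i * q ^ k i) / (z r * q ^ k r))) = E4 at *
  generalize (∏ r ∈ univ.erase i, (1 - v * (z r * q ^ k r))) = N at *
  generalize TT q c z n k' = T' at *
  generalize TT q c z n k = T at *
  generalize cc q c j v = X1 at *
  generalize pn q (v * q) (∑ r, n r - (j + 1)) = X2 at *
  generalize z i * q ^ k i = y at *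
  have hB : b = - (q ^ (j+1) * a) := by rw [e3]; ring
  have e5 : T * (X1 * X2) * (v * (1 - y) * E3 * (N / E2)) = X1 * X2 * v * N * (T * (1 - y) * E3 * E4) / (E2 * E4) := by
    field_simp
  rw [e5, ← rt]
  have e6 : T' * (X1 * X2) * (v * (-(-c * q ^ j) * (q * y) + -q ^ (j + 1)) * (a * E1) * (N / (b * E4))) =
      T' * X1 * X2 * v * N * E1 * (1 - c * y) / E4 * ((- (q ^ (j+1) * a)) / b) := by
    field_simp
    ring
  rw [e6, ← hB, div_self hb]
  field_simp

lemma claim2 {ι : Type*} [Fintype ι] [DecidableEq ι] {q : ℂ} {z : ι → ℂ} (h : Gen_s6 q z)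
    (c : ℂ) (n : ι → ℕ) (v : ℂ) (k' : ι → ℕ) (hk' : k' ≤ n) :
    TT q c z n k' * pn q (v * q) (∑ r, n r - ∑ r, k' r) * (cc q c (∑ r, k' r) v * ∏ r, (1 - v * (z r * q ^ k' r))
      - cc q c (∑ r, k' r) (q * v) * ∏ r, (1 - v * z r)) =
    ∑ i, if k' i = 0 then 0 else GG q c z n v i (Function.update k' i (k' i - 1)) := by
  rcases Nat.eq_zero_or_pos (∑ r, k' r) with h0 | hpos
  · have hk0 : ∀ i, k' i = 0 := by
      intro i
      simpa using (Finset.sum_eq_zero_iff.1 h0) i (Finset.mem_univ i)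
    rw [Finset.sum_eq_zero (fun i _ => if_pos (hk0 i)), h0]
    simp [hk0, cc]
  · obtain ⟨j, hj'⟩ : ∃ j, ∑ r, k' r = j + 1 := ⟨∑ r, k' r - 1, by omega⟩
    have L := lag (fun r => z r * q ^ k' r) z
      (fun i => mul_ne_zero (h.z0 i) (pow_ne_zero _ h.q0)) (h.inj k') (-c * q ^ j) 1 (-q ^ (j+1))
      (by rw [prodY, hj']; ring) v
    have key : ∀ i, (if k' i = 0 then 0 else GG q c z n v i (Function.update k' i (k' i - 1))) =
        TT q c z n k' * (cc q c j v * pn q (v * q) (∑ r, n r - (j + 1))) *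
    (v * (-(-c * q ^ j) * (z i * q ^ k' i) + -q ^ (j+1)) * (∏ r, (1 - z r / (z i * q ^ k' i))) *
      ∏ r ∈ univ.erase i, ((1 - v * (z r * q ^ k' r)) / (1 - (z r * q ^ k' r) / (z i * q ^ k' i)))) := by
      intro i
      split_ifs with hi
      · have : ∏ r, (1 - z r / (z i * q ^ k' i)) = 0 := by
          apply Finset.prod_eq_zero (Finset.mem_univ i)
          rw [hi, pow_zero, mul_one, div_self (h.z0 i), sub_self]
        rw [this]; ring
      · have hle : Function.update k' i (k' i - 1) ≤ n := by
          intro r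
          by_cases hr : r = i
          · subst hr; simp; have : k' r ≤ n r := hk' r; omega
          · simp [hr]; exact hk' r
        apply GG_shift h c n v i _ k' hle
        · have : k' i ≤ n i := hk' i
          simp; omega
        · funext r
          by_cases hr : r = i
          · subst hr; simp; omega
          · simp [hr]
        · have := Finset.sum_update_of_mem (Finset.mem_univ i) k' (k' i - 1)
          rw [this]
          have h3 := Finset.add_sum_erase univ k' (Finset.mem_univ i)
          rw [Finset.sdiff_singleton_eq_erase]
          omega
        · exact hj'
    rw [Finset.sum_congr rfl (fun i _ => key i), ← Finset.mul_sum, ← L, hj', cc_succ, cc_shift]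
    ring

noncomputable def FF {ι : Type*} [Fintype ι] [DecidableEq ι] (q c : ℂ) (z : ι → ℂ) (n : ι → ℕ) (v : ℂ) : ℂ :=
  ∑ k ∈ Finset.Icc 0 n, TT q c z n k * (pn q v (∑ r, n r - ∑ r, k r) * cc q c (∑ r, k r) v)

lemma sum_shift {ι : Type*} [Fintype ι] [DecidableEq ι] (n : ι → ℕ) (g : ι → (ι → ℕ) → ℂ)
    (hg : ∀ i k, k i = n i → g i k = 0) :
    ∑ k ∈ Finset.Icc 0 n, ∑ i, g i k =
      ∑ k ∈ Finset.Icc 0 n, ∑ i, if k i = 0 then 0 else g i (Function.update k i (k i - 1)) := by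
  rw [Finset.sum_comm, Finset.sum_comm (s := Finset.Icc 0 n)]
  apply Finset.sum_congr rfl
  intro i _
  have e1 : ∑ k ∈ Finset.Icc 0 n, g i k = ∑ k ∈ (Finset.Icc 0 n).filter (fun k => k i < n i), g i k := by
    rw [Finset.sum_filter]
    apply Finset.sum_congr rfl
    intro k hk
    split_ifs with h
    · rfl
    · apply hg
      have : k i ≤ n i := (Finset.mem_Icc.1 hk).2 i
      omega
  have e2 : ∑ k ∈ Finset.Icc 0 n, (if k i = 0 then 0 else g i (Function.update k i (k i - 1))) =
      ∑ k ∈ (Finset.Icc 0 n).filter (fun k => k i ≠ 0), g i (Function.update k i (k i - 1)) := by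
    rw [Finset.sum_filter]
    apply Finset.sum_congr rfl
    intro k hk
    by_cases h : k i = 0 <;> simp [h]
  rw [e1, e2]
  apply Finset.sum_nbij' (fun k => Function.update k i (k i + 1)) (fun k => Function.update k i (k i - 1))
  · intro k hk
    simp only [Finset.mem_filter, Finset.mem_Icc] at hk ⊢
    refine ⟨⟨fun r => Nat.zero_le _, fun r => ?_⟩, by simp⟩
    by_cases hr : r = i
    · subst hr; simp; omega
    · simp [hr]; exact hk.1.2 r
  · intro k hk
    simp only [Finset.mem_filter, Finset.mem_Icc] at hk ⊢
    have hi : k i ≤ n i := hk.1.2 i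
    refine ⟨⟨fun r => Nat.zero_le _, fun r => ?_⟩, by simp; omega⟩
    by_cases hr : r = i
    · subst hr; simp; omega
    · simp [hr]; exact hk.1.2 r
  · intro k hk
    simp
  · intro k hk
    simp only [Finset.mem_filter, Finset.mem_Icc] at hk
    funext r
    by_cases hr : r = i
    · subst hr; simp; omega
    · simp [hr]
  · intro k hk
    simp

lemma FF_rec {ι : Type*} [Fintype ι] [DecidableEq ι] {q : ℂ} {z : ι → ℂ} (h : Gen_s6 q z)
    (c : ℂ) (n : ι → ℕ) (v : ℂ) :
    FF q c z n (q * v) * ∏ r, (1 - v * z r) = FF q c z n v * ∏ r, (1 - v * (z r * q ^ n r)) := by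
  have s := sum_shift n (fun i k => GG q c z n v i k) (fun i k hik => GG_zero h c n v i k hik)
  rw [Finset.sum_congr rfl (fun k hk => (claim1 h c n v k (Finset.mem_Icc.1 hk).2).symm),
    Finset.sum_congr rfl (fun k hk => (claim2 h c n v k (Finset.mem_Icc.1 hk).2).symm),
    ← sub_eq_zero, ← Finset.sum_sub_distrib] at s
  rw [← sub_eq_zero, FF, FF, Finset.sum_mul, Finset.sum_mul, ← Finset.sum_sub_distrib, ← s]
  apply Finset.sum_congr rfl
  intro k _
  rw [mul_comm q v]
  ring

/-- right-hand side minus left-hand side -/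
noncomputable def DD {ι : Type*} [Fintype ι] [DecidableEq ι] (q c : ℂ) (z : ι → ℂ) (n : ι → ℕ) (s v : ℂ) : ℂ :=
  (∑ k ∈ Finset.Icc 0 n, (PP q z n k * PZ q z k *
    ∏ i, (pn q (s * z i) (k i) * pn q (c * (s * z i) * q ^ k i) (n i - k i))) *
      (pn q v (∑ r, n r - ∑ r, k r) * cc q c (∑ r, k r) v)) -
  PZ q z n * pn q c (∑ r, n r) * ∏ i, pn q (v * (s * z i)) (n i)

lemma DD_eq {ι : Type*} [Fintype ι] [DecidableEq ι] (q c : ℂ) (z : ι → ℂ) (n : ι → ℕ) (s v : ℂ) (hs : s ≠ 0) :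
    DD q c z n s v = FF q c (fun i => s * z i) n v -
      PZ q z n * pn q c (∑ r, n r) * ∏ i, pn q (v * (s * z i)) (n i) := by
  rw [DD, FF]
  congr 1
  apply Finset.sum_congr rfl
  intro k _
  rw [TT]
  congr 3
  · rw [PP, PP]
    apply Finset.prod_congr rfl; intro r _
    apply Finset.prod_congr rfl; intro t _
    rw [mul_assoc s, mul_assoc s, mul_div_mul_left _ _ hs]
  · rw [PZ, PZ]
    apply Finset.prod_congr rfl; intro r _
    apply Finset.prod_congr rfl; intro t _
    rw [mul_div_mul_left _ _ hs]

lemma DD_one {ι : Type*} [Fintype ι] [DecidableEq ι] (q c : ℂ) (z : ι → ℂ) (n : ι → ℕ) (s : ℂ) :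
    DD q c z n s 1 = 0 := by
  rw [DD, Finset.sum_eq_single n]
  · have e1 : PP q z n n = 1 := by
      simp [PP, pn_zero]
    have e2 : cc q c (∑ r, n r) 1 = pn q c (∑ r, n r) := by simp [cc, pn]
    rw [e1, e2]
    simp [pn_zero]
    ring
  · intro k hk hkn
    have hk := (Finset.mem_Icc.1 hk).2
    have hlt : ∑ r, k r < ∑ r, n r := by
      apply Finset.sum_lt_sum (fun i _ => hk i)
      by_contra hcon
      push Not at hcon
      exact hkn (le_antisymm hk (fun i => hcon i (Finset.mem_univ i)))
    obtain ⟨d, hd⟩ := Nat.exists_eq_add_of_lt hlt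
    have hd1 : ∑ r, n r - ∑ r, k r = d + 1 := by omega
    rw [hd1, pn_succ']; simp
  · intro hn
    exact absurd (Finset.mem_Icc.2 ⟨fun _ => Nat.zero_le _, le_rfl⟩) hn

def IsPl (f : ℂ → ℂ) : Prop := ∃ p : Polynomial ℂ, ∀ x, f x = p.eval x

lemma IsPl.const (a : ℂ) : IsPl (fun _ => a) := ⟨Polynomial.C a, by simp⟩
lemma IsPl.id : IsPl (fun x => x) := ⟨Polynomial.X, by simp⟩
lemma IsPl.mul {f g : ℂ → ℂ} (hf : IsPl f) (hg : IsPl g) : IsPl (fun x => f x * g x) := by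
  obtain ⟨p, hp⟩ := hf
  obtain ⟨r, hr⟩ := hg
  exact ⟨p * r, by simp [hp, hr]⟩
lemma IsPl.sub {f g : ℂ → ℂ} (hf : IsPl f) (hg : IsPl g) : IsPl (fun x => f x - g x) := by
  obtain ⟨p, hp⟩ := hf
  obtain ⟨r, hr⟩ := hg
  exact ⟨p - r, by simp [hp, hr]⟩
lemma IsPl.sum {κ : Type*} {S : Finset κ} {f : κ → ℂ → ℂ} (hf : ∀ k, IsPl (f k)) :
    IsPl (fun x => ∑ k ∈ S, f k x) := by
  choose p hp using hf
  exact ⟨∑ k ∈ S, p k, by simp [hp, Polynomial.eval_finsetSum]⟩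
lemma IsPl.prod {κ : Type*} {S : Finset κ} {f : κ → ℂ → ℂ} (hf : ∀ k, IsPl (f k)) :
    IsPl (fun x => ∏ k ∈ S, f k x) := by
  choose p hp using hf
  exact ⟨∏ k ∈ S, p k, by simp [hp, Polynomial.eval_prod]⟩
lemma IsPl.pn {f : ℂ → ℂ} (q : ℂ) (n : ℕ) (hf : IsPl f) : IsPl (fun x => pn q (f x) n) :=
  IsPl.prod (fun _ => (IsPl.const 1).sub (hf.mul (IsPl.const _)))
lemma IsPl.cc (q c : ℂ) (n : ℕ) : IsPl (fun x => cc q c n x) :=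
  IsPl.prod (fun _ => IsPl.id.sub (IsPl.const _))
lemma IsPl.zero {f : ℂ → ℂ} (hf : IsPl f) {S : Set ℂ} (hS : S.Infinite) (h0 : ∀ x ∈ S, f x = 0) (x : ℂ) :
    f x = 0 := by
  obtain ⟨p, hp⟩ := hf
  have : p = 0 := by
    apply Polynomial.eq_zero_of_infinite_isRoot
    apply hS.mono
    intro y hy
    have := h0 y hy
    rw [hp] at this
    exact this
  rw [hp, this]; simp

lemma DD_pl_v {ι : Type*} [Fintype ι] [DecidableEq ι] (q c : ℂ) (z : ι → ℂ) (n : ι → ℕ) (s : ℂ) :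
    IsPl (fun v => DD q c z n s v) := by
  apply IsPl.sub
  · apply IsPl.sum
    intro k
    exact (IsPl.const _).mul ((IsPl.id.pn _ _).mul (IsPl.cc _ _ _))
  · exact (IsPl.const _).mul (IsPl.prod fun i => (IsPl.id.mul (IsPl.const _)).pn _ _)

lemma DD_pl_s {ι : Type*} [Fintype ι] [DecidableEq ι] (q c : ℂ) (z : ι → ℂ) (n : ι → ℕ) (v : ℂ) :
    IsPl (fun s => DD q c z n s v) := by
  apply IsPl.sub
  · apply IsPl.sum
    intro k
    refine ((IsPl.const _).mul (IsPl.prod fun i => ?_)).mul (IsPl.const _)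
    exact ((IsPl.id.mul (IsPl.const _)).pn _ _).mul
      ((((IsPl.const _).mul (IsPl.id.mul (IsPl.const _))).mul (IsPl.const _)).pn _ _)
  · exact (IsPl.const _).mul (IsPl.prod fun i => ((IsPl.const _).mul (IsPl.id.mul (IsPl.const _))).pn _ _)

lemma DD_rec {ι : Type*} [Fintype ι] [DecidableEq ι] {q : ℂ} {z : ι → ℂ} (h : Gen_s6 q z)
    (c : ℂ) (n : ι → ℕ) (s v : ℂ) (hs : s ≠ 0) :
    DD q c z n s (q * v) * ∏ r, (1 - v * (s * z r)) = DD q c z n s v * ∏ r, (1 - v * (s * z r * q ^ n r)) := by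
  have h' : Gen_s6 q (fun i => s * z i) := by
    refine ⟨h.q0, fun i => mul_ne_zero hs (h.z0 i), ?_, h.qq⟩
    intro r t hrt a b he
    apply h.zz r t hrt a b
    apply mul_left_cancel₀ hs
    linear_combination he
  have e := FF_rec h' c n v
  rw [DD_eq _ _ _ _ _ _ hs, DD_eq _ _ _ _ _ _ hs, sub_mul, sub_mul, e]
  congr 1
  rw [mul_assoc (PZ q z n * _), mul_assoc (PZ q z n * _), ← Finset.prod_mul_distrib, ← Finset.prod_mul_distrib]
  congr 1
  apply Finset.prod_congr rfl
  intro r _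
  have e1 := pn_succ q (v * (s * z r)) (n r)
  rw [pn_succ'] at e1
  have : q * v * (s * z r) = v * (s * z r) * q := by ring
  rw [this]
  linear_combination e1

lemma DD_zero {ι : Type*} [Fintype ι] [DecidableEq ι] {q : ℂ} {z : ι → ℂ} (h : Gen_s6 q z)
    (c : ℂ) (n : ι → ℕ) (s v : ℂ) : DD q c z n s v = 0 := by
  have key : ∀ m : ℕ, ∀ s, DD q c z n s (q ^ m) = 0 := by
    intro m
    induction m with
    | zero => intro s; rw [pow_zero]; exact DD_one q c z n s
    | succ m ih =>
      have hfin : (insert 0 (Set.range (fun r => (q ^ m * z r)⁻¹))).Finite :=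
        (Set.finite_range _).insert 0
      apply (DD_pl_s q c z n (q ^ (m+1))).zero hfin.infinite_compl
      intro s hs
      simp only [Set.mem_compl_iff, Set.mem_insert_iff, Set.mem_range, not_or, not_exists] at hs
      have e := DD_rec h c n s (q ^ m) hs.1
      rw [ih s, zero_mul, ← pow_succ'] at e
      refine (mul_eq_zero.1 e).resolve_right ?_
      change _ ≠ _
      rw [Finset.prod_ne_zero_iff]
      intro r _ h0
      apply hs.2 r
      have : q ^ m * z r * s = 1 := by linear_combination -h0
      exact inv_eq_of_mul_eq_one_right this
  apply (DD_pl_v q c z n s).zero (S := Set.range (fun m : ℕ => q ^ m)) 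
  · apply Set.infinite_range_of_injective
    intro a b hab
    by_contra hne
    rcases lt_or_gt_of_ne hne with hlt | hlt
    · obtain ⟨d, rfl⟩ := Nat.exists_eq_add_of_lt hlt
      apply h.qq d
      apply mul_left_cancel₀ (pow_ne_zero a h.q0)
      simp only at hab
      rw [mul_one, ← pow_add, hab]; rfl
    · obtain ⟨d, rfl⟩ := Nat.exists_eq_add_of_lt hlt
      apply h.qq d
      apply mul_left_cancel₀ (pow_ne_zero b h.q0)
      simp only at hab
      rw [mul_one, ← pow_add, ← hab]; rfl
  · rintro _ ⟨m, rfl⟩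
    exact key m s

noncomputable def KK {ι : Type*} [Fintype ι] (q a ρ σ : ℂ) (X : ι → ℂ) (N y : ι → ℕ) : ℂ :=
  (∏ k, pn q (σ * X k) (y k) * (pn q (a * q / ρ * X k) (N k))⁻¹) * PP q X N y *
    (pn q (a * q / (ρ * σ)) (∑ r, N r - ∑ r, y r) * pn q ρ (∑ r, y r) / pn q (a * q / σ) (∑ r, N r)) *
    (a * q / (ρ * σ)) ^ (∑ r, y r)

noncomputable def MM {ι : Type*} [Fintype ι] (q a : ℂ) (X : ι → ℂ) (N y : ι → ℕ) : ℂ :=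
  PP q X N y * ∏ k, (pn q (a * q * X k) (N k + ∑ r, y r))⁻¹

noncomputable def dd {ι : Type*} [Fintype ι] (q a ρ σ : ℂ) (X : ι → ℂ) (N : ι → ℕ) : ℂ :=
  (∏ k, (pn q (a * q / ρ * X k) (N k))⁻¹) * (∏ k, pn q (σ * X k) (N k)) *
    (pn q ρ (∑ r, N r) / pn q (a * q / σ) (∑ r, N r)) * (a * q / (ρ * σ)) ^ (∑ r, N r)

lemma PP_shift {ι : Type*} [Fintype ι] (q : ℂ) (X : ι → ℂ) (m n k : ι → ℕ) :
    PP q X (m + n) (m + k) = PP q (fun i => X i * q ^ m i) n k := by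
  rw [PP, PP]
  apply Finset.prod_congr rfl; intro r _
  apply Finset.prod_congr rfl; intro t _
  simp only [Pi.add_apply]
  rw [Nat.add_sub_add_left, pow_add, pow_add, mul_assoc, mul_assoc]

lemma PP_shift0 {ι : Type*} [Fintype ι] (q : ℂ) (X : ι → ℂ) (m n : ι → ℕ) :
    PP q X (m + n) m = PZ q (fun i => X i * q ^ m i) n := by
  rw [PP, PZ]
  apply Finset.prod_congr rfl; intro r _
  apply Finset.prod_congr rfl; intro t _
  simp only [Pi.add_apply]
  rw [Nat.add_sub_cancel_left]

lemma cc_pn (q c w v : ℂ) (j : ℕ) (h : c = v * w) : cc q c j v = v ^ j * pn q w j := by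
  have e : v ^ j = ∏ _i ∈ Finset.range j, v := by simp
  rw [cc, pn, e, ← Finset.prod_mul_distrib]
  apply Finset.prod_congr rfl; intro i _
  rw [h]; ring

lemma Gen_s6.shift {ι : Type*} {q : ℂ} {X : ι → ℂ} (h : Gen_s6 q X) (m : ι → ℕ) :
    Gen_s6 q (fun i => X i * q ^ m i) := by
  refine ⟨h.q0, fun i => mul_ne_zero (h.z0 i) (pow_ne_zero _ h.q0), ?_, h.qq⟩
  intro r s hrs a b
  rw [mul_assoc, mul_assoc, ← pow_add, ← pow_add]
  exact h.zz r s hrs _ _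

lemma main_sum {ι : Type*} [Fintype ι] [DecidableEq ι] {q : ℂ} {X : ι → ℂ} (h : Gen_s6 q X) (a ρ σ : ℂ)
    (hρ : ρ ≠ 0) (hσ : σ ≠ 0)
    (h2 : ∀ k n, pn q (a * q * X k) n ≠ 0) (h3 : ∀ k n, pn q (a * q / ρ * X k) n ≠ 0)
    (h4 : ∀ n, pn q (a * q / σ) n ≠ 0) (m n : ι → ℕ) :
    ∑ k ∈ Finset.Icc 0 n, KK q a ρ σ X (m + n) (m + k) * MM q a X (m + k) m =
      MM q a X (m + n) m * dd q a ρ σ X m := by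
  have D := DD_zero (h.shift m) (a * q / σ * q ^ (∑ r, m r)) n σ (a * q / (ρ * σ))
  rw [DD, sub_eq_zero] at D
  obtain ⟨C, hC⟩ : ∃ C, C = (∏ k, pn q (σ * X k) (m k)) * (∏ k, (pn q (a * q / ρ * X k) (m k + n k))⁻¹) *
      (pn q ρ (∑ r, m r) * (a * q / (ρ * σ)) ^ (∑ r, m r) / pn q (a * q / σ) (∑ r, m r + ∑ r, n r)) *
      ∏ k, (pn q (a * q * X k) (m k + n k + ∑ r, m r))⁻¹ := ⟨_, rfl⟩
  have D2 := congrArg (fun t => C * t) D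
  simp only [Finset.mul_sum] at D2
  trans
  swap
  · trans
    · exact D2
    · rw [MM, dd, PP_shift0, hC, pn_add q (a * q / σ)]
      have e1 : (∏ k, (pn q (a * q / ρ * X k) (m k + n k))⁻¹) *
          ∏ i, pn q (a * q / (ρ * σ) * (σ * (X i * q ^ m i))) (n i) = ∏ k, (pn q (a * q / ρ * X k) (m k))⁻¹ := by
        rw [← Finset.prod_mul_distrib]
        apply Finset.prod_congr rfl; intro i _
        have e : a * q / (ρ * σ) * (σ * (X i * q ^ m i)) = a * q / ρ * X i * q ^ m i := by
          field_simp
        have h5 := h3 i (m i + n i)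
        rw [e]
        rw [pn_add] at h5 ⊢
        have h6 := left_ne_zero_of_mul h5
        have h7 := right_ne_zero_of_mul h5
        rw [mul_inv, mul_assoc, inv_mul_cancel₀ h7, mul_one]
      have h5 := h4 (∑ r, m r + ∑ r, n r)
      rw [pn_add] at h5
      have h6 := left_ne_zero_of_mul h5
      have h7 := right_ne_zero_of_mul h5
      simp only [Pi.add_apply]
      rw [← e1]
      generalize (∏ k, (pn q (a * q / ρ * X k) (m k + n k))⁻¹) = Y1
      generalize (∏ k, (pn q (a * q * X k) (m k + n k + ∑ r, m r))⁻¹) = Y2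
      generalize (∏ i, pn q (a * q / (ρ * σ) * (σ * (X i * q ^ m i))) (n i)) = Y3
      generalize (a * q / (ρ * σ)) ^ (∑ r, m r) = Y4
      generalize pn q (a * q / σ * q ^ (∑ r, m r)) (∑ r, n r) = Y5 at *
      generalize pn q (a * q / σ) (∑ r, m r) = Y6 at *
      field_simp
  · apply Finset.sum_congr rfl
    intro k hk
    have hk := (Finset.mem_Icc.1 hk).2
    rw [KK, MM, PP_shift, PP_shift0, hC, cc_pn q _ (ρ * q ^ (∑ r, m r)) _ _ (by field_simp)]
    simp only [Pi.add_apply, Finset.sum_add_distrib]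
    rw [Nat.add_sub_add_left, pn_add q ρ, pow_add (a * q / (ρ * σ)), Finset.prod_mul_distrib, Finset.prod_mul_distrib]
    have e1 : (∏ i, pn q (σ * X i) (m i + k i)) = (∏ i, pn q (σ * X i) (m i)) * 
        ∏ i, pn q (σ * (X i * q ^ m i)) (k i) := by
      rw [← Finset.prod_mul_distrib]
      apply Finset.prod_congr rfl; intro i _
      rw [pn_add, mul_assoc]
    have e2 : (∏ i, (pn q (a * q * X i) (m i + k i + ∑ r, m r))⁻¹) =
        (∏ i, (pn q (a * q * X i) (m i + n i + ∑ r, m r))⁻¹) *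
        ∏ i, pn q (a * q / σ * q ^ (∑ r, m r) * (σ * (X i * q ^ m i)) * q ^ k i) (n i - k i) := by
      rw [← Finset.prod_mul_distrib]
      apply Finset.prod_congr rfl; intro i _
      have h5 := h2 i (m i + n i + ∑ r, m r)
      have : m i + n i + ∑ r, m r = (m i + k i + ∑ r, m r) + (n i - k i) := by
        have : k i ≤ n i := hk i
        omega
      rw [this, pn_add] at h5
      rw [this, pn_add q _ (m i + k i + ∑ r, m r)]
      have h6 := left_ne_zero_of_mul h5
      have h7 := right_ne_zero_of_mul h5
      have e : a * q / σ * q ^ (∑ r, m r) * (σ * (X i * q ^ m i)) * q ^ k i =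
        a * q * X i * q ^ (m i + k i + ∑ r, m r) := by
        field_simp; ring
      rw [e, mul_inv, inv_mul_cancel_right₀ h7]
    rw [e1, e2]
    generalize (∏ k, (pn q (a * q / ρ * X k) (m k + n k))⁻¹) = Y1
    generalize (∏ k, (pn q (a * q * X k) (m k + n k + ∑ r, m r))⁻¹) = Y2
    generalize (∏ i, pn q (a * q / σ * q ^ (∑ r, m r) * (σ * (X i * q ^ m i)) * q ^ k i) (n i - k i)) = Y3
    generalize (a * q / (ρ * σ)) ^ (∑ r, m r) = Y4
    generalize (a * q / (ρ * σ)) ^ (∑ r, k r) = Y5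
    generalize pn q (a * q / (ρ * σ)) _ = Y6
    ring

lemma sum_swap {ι : Type*} [Fintype ι] [DecidableEq ι] (N : ι → ℕ) (f : (ι → ℕ) → (ι → ℕ) → ℂ) :
    ∑ y ∈ Finset.Icc 0 N, ∑ m ∈ Finset.Icc 0 y, f y m =
    ∑ m ∈ Finset.Icc 0 N, ∑ k ∈ Finset.Icc 0 (N - m), f (m + k) m := by
  have : ∀ m ∈ Finset.Icc 0 N, ∑ k ∈ Finset.Icc 0 (N - m), f (m + k) m = ∑ y ∈ Finset.Icc m N, f y m := by
    intro m hm
    have hm := (Finset.mem_Icc.1 hm).2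
    apply Finset.sum_nbij' (fun k => m + k) (fun y => y - m)
    · intro k hk
      have hk := (Finset.mem_Icc.1 hk).2
      refine Finset.mem_Icc.2 ⟨fun i => Nat.le_add_right _ _, fun i => ?_⟩
      have h1 : k i ≤ N i - m i := hk i
      have h2 : m i ≤ N i := hm i
      change m i + k i ≤ N i
      omega
    · intro k hk
      have hk := (Finset.mem_Icc.1 hk).2
      refine Finset.mem_Icc.2 ⟨fun i => Nat.zero_le _, fun i => ?_⟩
      exact Nat.sub_le_sub_right (hk i) _
    · intro k hk
      funext i; simp
    · intro k hk
      have hk := (Finset.mem_Icc.1 hk).1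
      funext i
      exact Nat.add_sub_cancel' (hk i)
    · intro k hk
      rfl
  rw [Finset.sum_congr rfl this]
  apply Finset.sum_comm'
  intro y m
  simp only [Finset.mem_Icc]
  constructor
  · rintro ⟨⟨_, h1⟩, _, h2⟩
    exact ⟨⟨h2, h1⟩, fun _ => Nat.zero_le _, h2.trans h1⟩
  · rintro ⟨⟨h2, h1⟩, h3, h4⟩
    exact ⟨⟨fun _ => Nat.zero_le _, h1⟩, fun _ => Nat.zero_le _, h2⟩

lemma PP_qp {ℓ : ℕ} {q xl : ℂ} (hq : q ≠ 0) (hxl : xl ≠ 0) (x : Fin ℓ → ℂ) (i j : Fin ℓ → ℕ) (hij : j ≤ i) :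
    (∏ r, ∏ s,
    (qp (q * (x r / x s) * q ^ ((j r : ℤ) - (j s : ℤ))) q ((i r : ℤ) - (j r : ℤ)))⁻¹) =
    PP q (fun k => x k / xl) i j := by
  rw [PP]
  apply Finset.prod_congr rfl; intro r _
  apply Finset.prod_congr rfl; intro s _
  rw [← Nat.cast_sub (hij r), qp_eq, zpow_sub₀ hq, zpow_natCast, zpow_natCast]
  congr 2
  rw [div_mul_eq_mul_div, div_mul_eq_mul_div, div_div_div_cancel_right₀ hxl, mul_assoc, div_mul_div_comm]

/-- **The A_ℓ generalization of Bailey's Lemma.**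
If `(A, B)` is an `A_ℓ`-Bailey pair, then the primed pair `(A', B')` defined by
(2.7a)–(2.7b) is again an `A_ℓ`-Bailey pair. -/
theorem Al_bailey_lemma (ℓ : ℕ) (hℓ : 1 ≤ ℓ) (q a ρ σ : ℂ)
    (hq : q ≠ 0) (ha : a ≠ 0) (hρ : ρ ≠ 0) (hσ : σ ≠ 0)
    (x : Fin ℓ → ℂ) (hx : ∀ k, x k ≠ 0)
    (xl : ℂ) (hxl : xl = x ⟨ℓ - 1, by omega⟩)
    -- genericity: the q-shifted factorials occurring in denominators are nonzero
    (hd1 : ∀ i j : Fin ℓ → ℕ, (∀ k, j k ≤ i k) → ∀ r s : Fin ℓ,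
      qp (q * (x r / x s) * q ^ ((j r : ℤ) - (j s : ℤ))) q ((i r : ℤ) - (j r : ℤ)) ≠ 0)
    (hd2 : ∀ i j : Fin ℓ → ℕ, (∀ k, j k ≤ i k) → ∀ k : Fin ℓ,
      qp (a * q * (x k / xl)) q ((i k : ℤ) + ∑ s, (j s : ℤ)) ≠ 0)
    (hd3 : ∀ (k : Fin ℓ) (n : ℕ), qp (a * q / ρ * (x k / xl)) q (n : ℤ) ≠ 0)
    (hd4 : ∀ n : ℕ, qp (a * q / σ) q (n : ℤ) ≠ 0)
    (A B A' B' : (Fin ℓ → ℕ) → ℂ)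
    -- `(A, B)` is an `A_ℓ`-Bailey pair
    (hAB : ∀ N : Fin ℓ → ℕ, B N = ∑ y ∈ Finset.Icc 0 N, MA ℓ q a x xl N y * A y)
    -- definition (2.7a) of `A'`
    (hA' : ∀ N : Fin ℓ → ℕ, A' N =
      (∏ k, (qp (a * q / ρ * (x k / xl)) q (N k : ℤ))⁻¹) *
      (∏ k, qp (σ * (x k / xl)) q (N k : ℤ)) *
      (qp ρ q (∑ s, (N s : ℤ)) / qp (a * q / σ) q (∑ s, (N s : ℤ))) *
      (a * q / (ρ * σ)) ^ (∑ s, (N s : ℤ)) * A N)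
    -- definition (2.7b) of `B'`
    (hB' : ∀ N : Fin ℓ → ℕ, B' N =
      ∑ y ∈ Finset.Icc 0 N,
        ((∏ k, qp (σ * (x k / xl)) q (y k : ℤ) *
            (qp (a * q / ρ * (x k / xl)) q (N k : ℤ))⁻¹) *
         (∏ r, ∏ s,
           (qp (q * (x r / x s) * q ^ ((y r : ℤ) - (y s : ℤ))) q
             ((N r : ℤ) - (y r : ℤ)))⁻¹) *
         (qp (a * q / (ρ * σ)) q ((∑ s, (N s : ℤ)) - ∑ s, (y s : ℤ)) *
            qp ρ q (∑ s, (y s : ℤ)) / qp (a * q / σ) q (∑ s, (N s : ℤ))) *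
         (a * q / (ρ * σ)) ^ (∑ s, (y s : ℤ)) * B y)) :
    -- then `(A', B')` is an `A_ℓ`-Bailey pair
    ∀ N : Fin ℓ → ℕ, B' N = ∑ y ∈ Finset.Icc 0 N, MA ℓ q a x xl N y * A' y := by
  have hxl0 : xl ≠ 0 := by rw [hxl]; exact hx _
  have hG : Gen_s6 q (fun k => x k / xl) := by
    refine ⟨hq, fun i => div_ne_zero (hx i) hxl0, ?_, ?_⟩
    · intro r s hrs b c he
      have := hd1 (fun k => if k = r then b + 1 else c + 1) (fun k => if k = r then b else c + 1)
        (by intro k; split_ifs <;> omega) r s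
      simp only [if_true, if_neg hrs.symm] at this
      have e0 : (((b + 1 : ℕ) : ℤ) - (b : ℤ)) = ((1 : ℕ) : ℤ) := by push_cast; ring
      rw [e0, qp_eq] at this
      apply this
      rw [pn, Finset.prod_range_one, zpow_sub₀ hq, zpow_natCast, zpow_natCast, pow_zero, pow_succ]
      have h1 := hx s
      have h2 := pow_ne_zero c hq
      have he' : x r * q ^ b = x s * q ^ c := by
        field_simp at he
        exact he
      field_simp
      rw [he']; ring
    · intro m hm
      have := hd1 (fun _ => m + 1) (fun _ => 0) (fun _ => Nat.zero_le _) ⟨0, hℓ⟩ ⟨0, hℓ⟩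
      have e0 : (((m + 1 : ℕ) : ℤ) - ((0 : ℕ) : ℤ)) = ((m + 1 : ℕ) : ℤ) := by simp
      simp only [e0, qp_eq] at this
      apply this
      rw [pn_succ, div_self (hx _)]
      simp only [sub_self, zpow_zero, mul_one]
      rw [← pow_succ', hm]; simp
  have h2 : ∀ k n, pn q (a * q * (x k / xl)) n ≠ 0 := by
    intro k n
    have := hd2 (fun _ => n) (fun _ => 0) (fun _ => Nat.zero_le _) k
    simpa [qp_eq] using this
  have h3 : ∀ k n, pn q (a * q / ρ * (x k / xl)) n ≠ 0 := by
    intro k n; rw [← qp_eq]; exact hd3 k n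
  have h4 : ∀ n, pn q (a * q / σ) n ≠ 0 := by
    intro n; rw [← qp_eq]; exact hd4 n
  have hM : ∀ i j : Fin ℓ → ℕ, j ≤ i → MA ℓ q a x xl i j = MM q a (fun k => x k / xl) i j := by
    intro i j hij
    rw [MA, MM, PP_qp hq hxl0 x i j hij]
    simp only [← Nat.cast_sum, ← Nat.cast_add, qp_eq]
  have hAA : ∀ N, A' N = dd q a ρ σ (fun k => x k / xl) N * A N := by
    intro N
    rw [hA', dd]
    simp only [← Nat.cast_sum, qp_eq, zpow_natCast]
  have hBB : ∀ N, B' N = ∑ y ∈ Finset.Icc 0 N, KK q a ρ σ (fun k => x k / xl) N y * B y := by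
    intro N
    rw [hB']
    apply Finset.sum_congr rfl
    intro y hy
    have hy := (Finset.mem_Icc.1 hy).2
    rw [KK, PP_qp hq hxl0 x N y hy]
    have hs : ∑ r, y r ≤ ∑ r, N r := Finset.sum_le_sum fun i _ => hy i
    simp only [← Nat.cast_sum, ← Nat.cast_sub hs, qp_eq, zpow_natCast]
  intro N
  rw [hBB]
  have e1 : ∀ y ∈ Finset.Icc 0 N, KK q a ρ σ (fun k => x k / xl) N y * B y =
      ∑ m ∈ Finset.Icc 0 y, KK q a ρ σ (fun k => x k / xl) N y * (MM q a (fun k => x k / xl) y m * A m) := by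
    intro y _
    rw [hAB, Finset.mul_sum]
    apply Finset.sum_congr rfl
    intro m hm
    rw [hM y m (Finset.mem_Icc.1 hm).2]
  rw [Finset.sum_congr rfl e1, sum_swap]
  apply Finset.sum_congr rfl
  intro m hm
  have hm := (Finset.mem_Icc.1 hm).2
  have e2 := main_sum hG a ρ σ hρ hσ h2 h3 h4 m (N - m)
  have e3 : m + (N - m) = N := by
    funext i; exact Nat.add_sub_cancel' (hm i)
  rw [e3] at e2
  rw [hM N m hm, hAA, ← mul_assoc, ← e2, Finset.sum_mul]
  apply Finset.sum_congr rfl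
  intro k _
  ring
end
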